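/- (Andersén–Lempert theorem for ℂⁿ.) Let n ≥ 2, let Ω ⊆ ℂⁿ be open, and let Φ : [0,1] × Ω → ℂⁿ be a map that is C¹-smooth jointly in (t, z) (as a map of real variables) and satisfies: (1) for every t ∈ [0,1] the map Φ_t := Φ(t, ·) : Ω → ℂⁿ is holomorphic and injective; (2) Φ₀ is the inclusion of Ω into ℂⁿ; (3) Φ_t(Ω) is Runge in ℂⁿ for every t ∈ [0,1]. Then for every ε > 0 and every compact set K ⊆ Ω there is a continuous map α : [0,1] × ℂⁿ → ℂⁿ such that each α_t := α(t, ·) is a holomorphic automorphism of ℂⁿ, α₀ = id, and ‖α_t(z) − Φ_t(z)‖ < ε for all t ∈ [0,1] and all z ∈ K. (This is Theorem 2.3 of the paper specialized to X = ℂⁿ, which has the density property.) -/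

import Mathlib

/-- An open set `Ω ⊆ ℂⁿ` is Runge in `ℂⁿ` if every function holomorphic on `Ω`
can be approximated uniformly on every compact subset of `Ω` by entire
functions. -/
def IsRungeIn {n : ℕ} (Ω : Set (EuclideanSpace ℂ (Fin n))) : Prop :=
  ∀ f : EuclideanSpace ℂ (Fin n) → ℂ, DifferentiableOn ℂ f Ω →
    ∀ K : Set (EuclideanSpace ℂ (Fin n)), K ⊆ Ω → IsCompact K →
      ∀ ε : ℝ, 0 < ε →
        ∃ g : EuclideanSpace ℂ (Fin n) → ℂ, Differentiable ℂ g ∧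
          ∀ z ∈ K, ‖g z - f z‖ < ε

/-- A holomorphic automorphism of `ℂⁿ`: a bijective entire map whose inverse is
also entire. -/
def IsHolomorphicAutomorphism {n : ℕ} (g : EuclideanSpace ℂ (Fin n) → EuclideanSpace ℂ (Fin n)) :
    Prop :=
  Differentiable ℂ g ∧
    ∃ ginv : EuclideanSpace ℂ (Fin n) → EuclideanSpace ℂ (Fin n),
      Differentiable ℂ ginv ∧ Function.LeftInverse ginv g ∧ Function.RightInverse ginv g

open Set Filter Metric
open scoped Topology

section SeveralVariables

variable {E F : Type*} [NormedAddCommGroup E] [NormedSpace ℂ E]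
  [NormedAddCommGroup F] [NormedSpace ℂ F]

/-- Cauchy estimate for the Fréchet derivative of a bounded holomorphic map on a ball. -/
theorem norm_fderiv_le_of_forall_mem_ball {f : E → F} {c : E} {R M : ℝ} (hR : 0 < R)
    (hf : DifferentiableOn ℂ f (ball c R)) (hM : ∀ z ∈ ball c R, ‖f z‖ ≤ M) :
    ‖fderiv ℂ f c‖ ≤ 2 * M / R := by
  refine Complex.norm_fderiv_le_div_of_mapsTo_ball hf (fun z hz => ?_) hR
  rw [mem_closedBall, dist_eq_norm]
  calc ‖f z - f c‖ ≤ ‖f z‖ + ‖f c‖ := norm_sub_le _ _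
    _ ≤ 2 * M := by linarith [hM z hz, hM c (mem_ball_self hR)]

/-- The derivative of a holomorphic map is continuous. -/
theorem continuousOn_fderiv_of_differentiableOn [FiniteDimensional ℂ E] {f : E → F} {U : Set E}
    (hU : IsOpen U) (hf : DifferentiableOn ℂ f U) : ContinuousOn (fderiv ℂ f) U := by
  have : ProperSpace E := FiniteDimensional.proper ℂ E
  intro c hc
  obtain ⟨r, hr, hrU⟩ := Metric.isOpen_iff.1 hU c hc
  have huc : UniformContinuousOn f (closedBall c (r / 2)) :=
    (isCompact_closedBall c (r / 2)).uniformContinuousOn_of_continuous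
      (hf.continuousOn.mono ((closedBall_subset_ball (by linarith)).trans hrU))
  refine ContinuousAt.continuousWithinAt (Metric.continuousAt_iff.2 fun ε hε => ?_)
  obtain ⟨δ, hδ, H⟩ := Metric.uniformContinuousOn_iff.1 huc (ε * (r / 4) / 4) (by positivity)
  refine ⟨min δ (r / 4), by positivity, fun {x} hx => ?_⟩
  have hxδ := hx.trans_le (min_le_left _ _)
  have hxr := hx.trans_le (min_le_right _ _)
  have hdiff : ∀ w ∈ ball c (r / 4), w + (x - c) ∈ closedBall c (r / 2) := fun w hw => by
    rw [mem_closedBall, dist_eq_norm]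
    rw [mem_ball, dist_eq_norm] at hw
    rw [dist_eq_norm] at hxr
    calc ‖w + (x - c) - c‖ = ‖(w - c) + (x - c)‖ := by congr 1; abel
      _ ≤ ‖w - c‖ + ‖x - c‖ := norm_add_le _ _
      _ ≤ r / 2 := by linarith
  have hsub : closedBall c (r / 2) ⊆ U := (closedBall_subset_ball (by linarith)).trans hrU
  have hd1 : ∀ w ∈ ball c (r / 4), DifferentiableAt ℂ (fun w => f (w + (x - c))) w := fun w hw =>
    (hf.differentiableAt (hU.mem_nhds (hsub (hdiff w hw)))).comp w
      (differentiableAt_id.add_const _)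
  have hd2 : ∀ w ∈ ball c (r / 4), DifferentiableAt ℂ f w := fun w hw =>
    hf.differentiableAt (hU.mem_nhds (hrU (ball_subset_ball (by linarith) hw)))
  have key := norm_fderiv_le_of_forall_mem_ball (f := fun w => f (w + (x - c)) - f w) (c := c)
    (R := r / 4) (M := ε * (r / 4) / 4) (by positivity)
    (fun w hw => ((hd1 w hw).sub (hd2 w hw)).differentiableWithinAt) (fun w hw => by
      rw [← dist_eq_norm]
      refine (H _ (hdiff w hw) _ (ball_subset_closedBall (ball_subset_ball (by linarith) hw))
        ?_).le
      rw [dist_eq_norm, add_sub_cancel_left, ← dist_eq_norm]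
      exact hxδ)
  have hc4 : c ∈ ball c (r / 4) := mem_ball_self (by positivity)
  rw [fderiv_fun_sub (hd1 c hc4) (hd2 c hc4), fderiv_comp_add_right, add_sub_cancel] at key
  rw [dist_eq_norm]
  refine key.trans_lt ?_
  rw [div_lt_iff₀ (by positivity)]
  nlinarith [mul_pos hε hr]

/-- A holomorphic map on an open set of a finite-dimensional space is `C¹` over `ℂ`. -/
theorem contDiffAt_one_of_differentiableOn [FiniteDimensional ℂ E] {f : E → F} {U : Set E}
    (hU : IsOpen U) (hf : DifferentiableOn ℂ f U) {c : E} (hc : c ∈ U) : ContDiffAt ℂ 1 f c := by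
  have h : ContDiffOn ℂ (0 + 1) f U := by
    rw [contDiffOn_succ_iff_fderiv_of_isOpen hU]
    exact ⟨hf, by simp, contDiffOn_zero.2 (continuousOn_fderiv_of_differentiableOn hU hf)⟩
  exact (by simpa using h : ContDiffOn ℂ 1 f U).contDiffAt (hU.mem_nhds hc)

/-- Uniform limits of holomorphic maps on a ball are holomorphic. -/
theorem differentiableAt_of_tendstoUniformlyOn_ball [CompleteSpace F] {ι : Type*} {l : Filter ι}
    [l.NeBot] {q : ι → E → F} {f : E → F} {c : E} {R : ℝ} (hR : 0 < R)
    (hq : ∀ᶠ i in l, DifferentiableOn ℂ (q i) (ball c R))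
    (hlim : TendstoUniformlyOn q f l (ball c R)) : DifferentiableAt ℂ f c := by
  have hsub : ∀ x ∈ ball c (R / 2), ball x (R / 2) ⊆ ball c R := fun x hx =>
    ball_subset_ball' (by rw [mem_ball] at hx; linarith)
  have hcauchy : UniformCauchySeqOn (fun i => fderiv ℂ (q i)) l (ball c (R / 2)) := by
    intro u hu
    obtain ⟨ε, hε, hεu⟩ := Metric.mem_uniformity_dist.1 hu
    have h1 := hlim.uniformCauchySeqOn _ (Metric.dist_mem_uniformity
      (show 0 < ε * R / 8 by positivity))
    filter_upwards [h1, hq.prod_mk hq] with i hi hqi x hx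
    apply hεu
    have hda : DifferentiableAt ℂ (q i.1) x :=
      hqi.1.differentiableAt (isOpen_ball.mem_nhds (hsub x hx (mem_ball_self (by positivity))))
    have hdb : DifferentiableAt ℂ (q i.2) x :=
      hqi.2.differentiableAt (isOpen_ball.mem_nhds (hsub x hx (mem_ball_self (by positivity))))
    rw [dist_eq_norm, ← fderiv_sub hda hdb]
    refine (norm_fderiv_le_of_forall_mem_ball (R := R / 2) (M := ε * R / 8) (by positivity)
      ((hqi.1.mono (hsub x hx)).sub (hqi.2.mono (hsub x hx))) fun z hz => ?_).trans_lt ?_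
    · have := hi z (hsub x hx hz)
      simp only [dist_eq_norm] at this
      exact this.le
    · rw [div_lt_iff₀ (by positivity)]
      nlinarith [mul_pos hε hR]
  have hlimx : ∀ x ∈ ball c (R / 2), ∃ g', Tendsto (fun i => fderiv ℂ (q i) x) l (𝓝 g') :=
    fun x hx => cauchy_map_iff_exists_tendsto.1 (hcauchy.cauchy_map hx)
  choose! g' hg' using hlimx
  have hunif := hcauchy.tendstoUniformlyOn_of_tendsto hg'
  have hball : ball c (R / 2) ∈ 𝓝 c := ball_mem_nhds c (by positivity)
  refine (hasFDerivAt_of_tendstoUniformlyOnFilter (𝕜 := ℂ) (f := q) (l := l)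
    (f' := fun i => fderiv ℂ (q i)) (g' := g') (x := c) ?_ ?_ ?_).differentiableAt
  · exact (tendstoUniformlyOn_iff_tendstoUniformlyOnFilter.1 hunif).mono_right
      (le_principal_iff.2 hball)
  · filter_upwards [hq.prod_mk hball] with p hp
    exact (hp.1.differentiableAt (isOpen_ball.mem_nhds
      (ball_subset_ball (by linarith) hp.2))).hasFDerivAt
  · filter_upwards [hball] with y hy
    exact hlim.tendsto_at (ball_subset_ball (by linarith) hy)

/-- Directional derivatives of holomorphic maps are holomorphic. -/
theorem differentiableOn_fderiv_apply [FiniteDimensional ℂ E] [CompleteSpace F] {f : E → F}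
    {U : Set E} (hU : IsOpen U) (hf : DifferentiableOn ℂ f U) (v : E) :
    DifferentiableOn ℂ (fun z => fderiv ℂ f z v) U := by
  have : ProperSpace E := FiniteDimensional.proper ℂ E
  intro c hc
  obtain ⟨r, hr, hrU⟩ := Metric.isOpen_iff.1 hU c hc
  have hsub : closedBall c (r / 2) ⊆ U := (closedBall_subset_ball (by linarith)).trans hrU
  have huc : UniformContinuousOn (fderiv ℂ f) (closedBall c (r / 2)) :=
    (isCompact_closedBall c (r / 2)).uniformContinuousOn_of_continuous
      ((continuousOn_fderiv_of_differentiableOn hU hf).mono hsub)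
  have hsmall : ∀ δ : ℝ, 0 < δ → ∀ᶠ s : ℂ in 𝓝[≠] 0, ‖s • v‖ < δ := fun δ hδ => by
    have : Tendsto (fun s : ℂ => ‖s • v‖) (𝓝 0) (𝓝 0) := by
      have : Continuous fun s : ℂ => ‖s • v‖ := by fun_prop
      simpa using this.tendsto 0
    exact (this.mono_left nhdsWithin_le_nhds).eventually (gt_mem_nhds hδ)
  refine (differentiableAt_of_tendstoUniformlyOn_ball (l := 𝓝[≠] (0 : ℂ)) (R := r / 4)
    (q := fun s z => s⁻¹ • (f (z + s • v) - f z)) (by positivity) ?_ ?_).differentiableWithinAt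
  · filter_upwards [hsmall (r / 4) (by positivity)] with s hs z hz
    rw [mem_ball, dist_eq_norm] at hz
    have h1 : z + s • v ∈ U := hrU (by
      rw [mem_ball, dist_eq_norm]
      calc ‖z + s • v - c‖ = ‖(z - c) + s • v‖ := by congr 1; abel
        _ ≤ ‖z - c‖ + ‖s • v‖ := norm_add_le _ _
        _ < r := by linarith)
    have h2 : z ∈ U := hrU (by rw [mem_ball, dist_eq_norm]; linarith)
    have h3 : DifferentiableAt ℂ (fun z => f (z + s • v)) z :=
      (hf.differentiableAt (hU.mem_nhds h1)).comp z (differentiableAt_id.add_const _)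
    exact ((h3.sub (hf.differentiableAt (hU.mem_nhds h2))).const_smul _).differentiableWithinAt
  · rw [Metric.tendstoUniformlyOn_iff]
    intro ε hε
    obtain ⟨δ, hδ, H⟩ := Metric.uniformContinuousOn_iff.1 huc (ε / (2 * (‖v‖ + 1)))
      (by positivity)
    filter_upwards [hsmall (min δ (r / 4)) (by positivity), self_mem_nhdsWithin] with s hs hs0 z hz
    have hs0 : s ≠ 0 := hs0
    rw [mem_ball, dist_eq_norm] at hz
    have hmem : ∀ t ∈ segment ℝ z (z + s • v), t ∈ closedBall c (r / 2) ∧ dist t z < δ := by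
      intro t ht
      have htz : dist t z < min δ (r / 4) := by
        refine lt_of_le_of_lt ?_ hs
        rw [segment_eq_image'] at ht
        obtain ⟨θ, hθ, rfl⟩ := ht
        rw [dist_eq_norm, add_sub_cancel_left, add_sub_cancel_left, norm_smul, Real.norm_eq_abs,
          abs_of_nonneg hθ.1]
        exact mul_le_of_le_one_left (norm_nonneg _) hθ.2
      refine ⟨?_, htz.trans_le (min_le_left _ _)⟩
      have h4 := htz.trans_le (min_le_right _ _)
      rw [mem_closedBall]
      have := dist_triangle t z c
      rw [← dist_eq_norm] at hz
      linarith
    have hzm := hmem z (left_mem_segment ℝ _ _)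
    have hmv := (convex_segment (𝕜 := ℝ) z (z + s • v)).norm_image_sub_le_of_norm_hasFDerivWithin_le'
      (𝕜 := ℂ) (f := f) (f' := fderiv ℂ f) (φ := fderiv ℂ f z) (C := ε / (2 * (‖v‖ + 1)))
      (fun t ht => (hf.differentiableAt
        (hU.mem_nhds (hsub (hmem t ht).1))).hasFDerivAt.hasFDerivWithinAt)
      (fun t ht => by
        rw [← dist_eq_norm]
        exact (H t (hmem t ht).1 z hzm.1 (hmem t ht).2).le)
      (left_mem_segment ℝ _ _) (right_mem_segment ℝ _ _)
    rw [add_sub_cancel_left, map_smul] at hmv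
    rw [dist_eq_norm, ← norm_neg]
    have : -(fderiv ℂ f z v - s⁻¹ • (f (z + s • v) - f z))
        = s⁻¹ • (f (z + s • v) - f z - s • fderiv ℂ f z v) := by
      rw [smul_sub s⁻¹ _ (s • _), inv_smul_smul₀ hs0]; abel
    rw [this, norm_smul, norm_inv]
    have hsn : 0 < ‖s‖ := norm_pos_iff.2 hs0
    rw [inv_mul_lt_iff₀ hsn]
    refine hmv.trans_lt ?_
    rw [norm_smul, div_mul_eq_mul_div, div_lt_iff₀ (by positivity)]
    nlinarith [mul_pos hε hsn, norm_nonneg v, mul_nonneg (mul_pos hε hsn).le (norm_nonneg v)]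

end SeveralVariables

section Osgood

/-- An injective holomorphic function of one variable has nonvanishing derivative. -/
theorem deriv_ne_zero_of_injOn {f : ℂ → ℂ} {U : Set ℂ} (hU : IsOpen U)
    (hf : DifferentiableOn ℂ f U) (hinj : InjOn f U) {a : ℂ} (ha : a ∈ U) : deriv f a ≠ 0 := by
  intro h0
  have hnc : ∀ z ∈ U, ¬ ∀ᶠ w in 𝓝 z, f w = f z := by
    intro z hz h
    have h1 : ∀ᶠ w in 𝓝[≠] z, w ∈ U ∧ f w = f z ∧ w ≠ z := by
      filter_upwards [nhdsWithin_le_nhds (hU.mem_nhds hz), nhdsWithin_le_nhds h,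
        self_mem_nhdsWithin] with w hw hw' hw''
      exact ⟨hw, hw', hw''⟩
    obtain ⟨w, hw, hwz, hne⟩ := h1.exists
    exact hne (hinj hw hz hwz)
  have hopen : ∀ z ∈ U, 𝓝 (f z) ≤ map f (𝓝 z) := fun z hz =>
    (hf.analyticAt (hU.mem_nhds hz)).eventually_constant_or_nhds_le_map_nhds.resolve_left
      (hnc z hz)
  set g := Function.invFunOn f U with hg
  have hgf : ∀ z ∈ U, g (f z) = z := fun z hz => hinj.leftInvOn_invFunOn hz
  have hgc : ∀ z ∈ U, ContinuousAt g (f z) := by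
    intro z hz
    rw [ContinuousAt, hgf z hz]
    refine Tendsto.mono_left ?_ (hopen z hz)
    rw [tendsto_map'_iff]
    exact tendsto_id.congr' ((hU.eventually_mem hz).mono fun w hw =>
      (hgf w hw).symm)
  have hfg : ∀ z ∈ U, ∀ᶠ w in 𝓝 (f z), f (g w) = w := fun z hz =>
    hopen z hz (by
      rw [mem_map]
      filter_upwards [hU.mem_nhds hz] with w hw
      exact congrArg f (hgf w hw))
  have hda : AnalyticAt ℂ (deriv f) a := (hf.analyticAt (hU.mem_nhds ha)).deriv
  have hne : ∀ᶠ z in 𝓝[≠] a, deriv f z ≠ 0 := by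
    refine hda.eventually_eq_zero_or_eventually_ne_zero.resolve_left fun h => hnc a ha ?_
    obtain ⟨r, hr, hball⟩ := Metric.eventually_nhds_iff_ball.1 (h.and (hU.mem_nhds ha))
    filter_upwards [ball_mem_nhds a hr] with w hw
    exact isOpen_ball.is_const_of_deriv_eq_zero (convex_ball a r).isPreconnected
      (hf.mono fun z hz => (hball z hz).2) (fun z hz => (hball z hz).1) hw (mem_ball_self hr)
  have hgd : ∀ᶠ w in 𝓝[≠] (f a), DifferentiableAt ℂ g w := by
    rw [eventually_nhdsWithin_iff] at hne ⊢
    refine hopen a ha ?_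
    rw [mem_map]
    filter_upwards [hne, hU.mem_nhds ha] with z hz hzU
    intro hfz
    have hza : z ≠ a := fun h => hfz (by rw [h]; rfl)
    refine (HasDerivAt.of_local_left_inverse (hgc z hzU) ?_ (hz hza)
      (hfg z hzU)).differentiableAt
    rw [hgf z hzU]
    exact (hf.differentiableAt (hU.mem_nhds hzU)).hasDerivAt
  have hga : DifferentiableAt ℂ g (f a) :=
    (Complex.analyticAt_of_differentiable_on_punctured_nhds_of_continuousAt hgd
      (hgc a ha)).differentiableAt
  have hcomp : HasDerivAt (g ∘ f) (deriv g (f a) * deriv f a) a :=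
    hga.hasDerivAt.comp a (hf.differentiableAt (hU.mem_nhds ha)).hasDerivAt
  have hid : HasDerivAt (g ∘ f) 1 a := (hasDerivAt_id a).congr_of_eventuallyEq
    ((hU.eventually_mem ha).mono fun w hw => hgf w hw)
  have := hcomp.unique hid
  simp [h0] at this

/-- A holomorphic function that is smaller at the centre than on the boundary of a disc has a
zero in the disc. -/
theorem exists_zero_mem_closedBall {f : ℂ → ℂ} {r m : ℝ} (hr : 0 < r)
    (hf : DifferentiableOn ℂ f (closedBall 0 r)) (h0 : ‖f 0‖ < m)
    (hm : ∀ s ∈ sphere (0 : ℂ) r, m < ‖f s‖) : ∃ s ∈ closedBall (0 : ℂ) r, f s = 0 := by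
  by_contra! hne
  have hm0 : 0 < m := (norm_nonneg _).trans_lt h0
  have hd : DiffContOnCl ℂ (fun s => (f s)⁻¹) (ball 0 r) := by
    refine DifferentiableOn.diffContOnCl ?_
    rw [closure_ball _ hr.ne']
    exact hf.inv hne
  have := Complex.norm_le_of_forall_mem_frontier_norm_le isBounded_ball hd (C := m⁻¹)
    (fun s hs => by
      rw [frontier_ball _ hr.ne'] at hs
      rw [norm_inv]
      exact inv_anti₀ hm0 (hm s hs).le) (subset_closure (mem_ball_self hr))
  rw [norm_inv, inv_le_inv₀ (norm_pos_iff.2 (hne 0 (mem_closedBall_self hr.le))) hm0] at this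
  linarith

variable {E F : Type*} [NormedAddCommGroup E] [NormedSpace ℂ E] [FiniteDimensional ℂ E]
  [NormedAddCommGroup F] [NormedSpace ℂ F] [FiniteDimensional ℂ F]

/-- The Jacobian determinant of a holomorphic map is holomorphic. -/
theorem exists_jacobian (hdim : Module.finrank ℂ E = Module.finrank ℂ F) {f : E → F} {U : Set E}
    (hU : IsOpen U) (hf : DifferentiableOn ℂ f U) :
    ∃ h : E → ℂ, DifferentiableOn ℂ h U ∧
      ∀ z, h z = 0 ↔ ¬ Function.Injective (fderiv ℂ f z) := by
  have : CompleteSpace F := FiniteDimensional.complete ℂ F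
  let b := Module.finBasis ℂ E
  let c := Module.finBasisOfFinrankEq ℂ F hdim.symm
  refine ⟨fun z => (LinearMap.toMatrix b c (fderiv ℂ f z : E →ₗ[ℂ] F)).det, ?_, fun z => ?_⟩
  · simp only [Matrix.det_apply, LinearMap.toMatrix_apply]
    refine DifferentiableOn.fun_sum fun σ _ => DifferentiableOn.fun_const_smul (fun z hz => ?_) _
    refine (HasFDerivAt.finsetProd fun i _ => DifferentiableAt.hasFDerivAt
      ?_).differentiableAt.differentiableWithinAt
    exact ((LinearMap.toContinuousLinearMap (c.coord (σ i))).differentiable.comp_differentiableOn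
      (differentiableOn_fderiv_apply hU hf (b i))).differentiableAt (hU.mem_nhds hz)
  · rw [← Matrix.exists_mulVec_eq_zero_iff, injective_iff_map_eq_zero]
    push Not
    constructor
    · rintro ⟨v, hv, hMv⟩
      refine ⟨b.equivFun.symm v, ?_, fun h => hv (b.equivFun.symm.map_eq_zero_iff.1 h)⟩
      have h1 := LinearMap.toMatrix_mulVec_repr b c (fderiv ℂ f z : E →ₗ[ℂ] F) (b.equivFun.symm v)
      rw [← b.equivFun_apply, LinearEquiv.apply_symm_apply, hMv] at h1
      have h2 : c.repr (fderiv ℂ f z (b.equivFun.symm v)) = 0 := by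
        ext i; exact (congrFun h1 i).symm
      exact c.repr.map_eq_zero_iff.1 h2
    · rintro ⟨x, hx, hx0⟩
      refine ⟨b.repr x, fun h => hx0 ?_, ?_⟩
      · have : b.equivFun x = 0 := h
        simpa using this
      · rw [LinearMap.toMatrix_mulVec_repr]
        simp [hx]

/-- Iterated directional derivatives of holomorphic functions are holomorphic. -/
theorem differentiableOn_iterate_fderiv_apply {h : E → ℂ} {U : Set E} (hU : IsOpen U)
    (hh : DifferentiableOn ℂ h U) (v : E) (k : ℕ) :
    DifferentiableOn ℂ ((fun (g : E → ℂ) z => fderiv ℂ g z v)^[k] h) U := by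
  induction k with
  | zero => exact hh
  | succ k ih =>
    rw [Function.iterate_succ_apply']
    exact differentiableOn_fderiv_apply hU ih v

/-- Iterated directional derivatives restrict to iterated derivatives on complex lines. -/
theorem iteratedDeriv_line_eq {h : E → ℂ} {U : Set E} (hU : IsOpen U)
    (hh : DifferentiableOn ℂ h U) (c v : E) (k : ℕ) {s : ℂ} (hs : c + s • v ∈ U) :
    iteratedDeriv k (fun s : ℂ => h (c + s • v)) s
      = (fun (g : E → ℂ) z => fderiv ℂ g z v)^[k] h (c + s • v) := by
  induction k generalizing s with
  | zero => simp
  | succ k ih =>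
    have hcont : Continuous fun s : ℂ => c + s • v := by fun_prop
    have hev : iteratedDeriv k (fun s : ℂ => h (c + s • v)) =ᶠ[𝓝 s]
        fun s => (fun (g : E → ℂ) z => fderiv ℂ g z v)^[k] h (c + s • v) := by
      filter_upwards [(hU.preimage hcont).mem_nhds hs] with t ht using ih ht
    rw [iteratedDeriv_succ, hev.deriv_eq, Function.iterate_succ_apply']
    have h1 : HasDerivAt (fun s : ℂ => c + s • v) v s := by
      simpa using ((hasDerivAt_id s).smul_const v).const_add c
    exact (((differentiableOn_iterate_fderiv_apply hU hh v k).differentiableAt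
      (hU.mem_nhds hs)).hasFDerivAt.comp_hasDerivAt s h1).deriv

/-- If the iterated derivatives of a holomorphic function in a direction vanish at the centre of a
ball, the function vanishes on the line through the centre. -/
theorem eq_zero_of_iterate_fderiv_eq_zero {h : E → ℂ} {c v : E} {R : ℝ}
    (hh : DifferentiableOn ℂ h (ball c R)) (hv : c + v ∈ ball c R)
    (h0 : ∀ k, (fun (g : E → ℂ) z => fderiv ℂ g z v)^[k] h c = 0) : h (c + v) = 0 := by
  have hvR : ‖v‖ < R := by simpa using hv
  obtain ⟨R', hR1, hR'⟩ : ∃ R' : ℝ, 1 < R' ∧ R' * ‖v‖ ≤ R := by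
    rcases (norm_nonneg v).eq_or_lt' with h | h
    · exact ⟨2, by norm_num, by rw [h] at hvR ⊢; linarith⟩
    · exact ⟨R / ‖v‖, by rwa [lt_div_iff₀ h, one_mul], by rw [div_mul_cancel₀ _ h.ne']⟩
  have hmem : ∀ s ∈ ball (0 : ℂ) R', c + s • v ∈ ball c R := fun s hs => by
    rw [mem_ball_zero_iff] at hs
    have : ‖s‖ * ‖v‖ < R := by
      rcases (norm_nonneg v).eq_or_lt' with h | h
      · rw [h] at hvR ⊢; simpa using hvR
      · exact (mul_lt_mul_of_pos_right hs h).trans_le hR'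
    simpa [norm_smul] using this
  have hd : DifferentiableOn ℂ (fun s : ℂ => h (c + s • v)) (ball 0 R') :=
    hh.comp (by fun_prop) hmem
  have := Complex.taylorSeries_eq_on_ball' (c := 0) (r := R') (z := 1)
    (by simpa using hR1) hd
  have hc : c + (0 : ℂ) • v ∈ ball c R := hmem 0 (mem_ball_self (by linarith))
  simp only [iteratedDeriv_line_eq isOpen_ball hh c v _ hc, zero_smul, add_zero, h0] at this
  simpa using this.symm

/-- A holomorphic map on a space of dimension at least two whose derivative vanishes wherever it is
singular cannot be injective near a singular point. -/
theorem fderiv_ne_zero_of_injOn (hdim : Module.finrank ℂ E = Module.finrank ℂ F)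
    (h2 : 2 ≤ Module.finrank ℂ E) {f : E → F} {U : Set E} (hU : IsOpen U)
    (hf : DifferentiableOn ℂ f U) (hinj : InjOn f U)
    (hsing : ∀ z ∈ U, ¬ Function.Injective (fderiv ℂ f z) → fderiv ℂ f z = 0)
    {a : E} (ha : a ∈ U) : fderiv ℂ f a ≠ 0 := by
  intro ha0
  have hnt : Nontrivial E := Module.nontrivial_of_finrank_pos (R := ℂ) (by omega)
  obtain ⟨h, hh, hh0⟩ := exists_jacobian hdim hU hf
  have hzero : ∀ z ∈ U, h z = 0 → fderiv ℂ f z = 0 := fun z hz hz0 => hsing z hz ((hh0 z).1 hz0)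
  have hha : h a = 0 := (hh0 a).2 fun hi => by
    obtain ⟨x, hx⟩ := exists_ne (0 : E)
    exact hx (hi (by simp [ha0]))
  obtain ⟨ρ, hρ, hρU⟩ := Metric.isOpen_iff.1 hU a ha
  have hhB := hh.mono hρU
  -- a direction along which the Jacobian is not identically zero
  obtain ⟨v, hv, hv0⟩ : ∃ v, a + v ∈ ball a ρ ∧ h (a + v) ≠ 0 := by
    by_contra! hcon
    have hall : ∀ z ∈ ball a ρ, fderiv ℂ f z = 0 := fun z hz =>
      hzero z (hρU hz) (by simpa using hcon (z - a) (by simpa using hz))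
    obtain ⟨x, hx⟩ := exists_ne (0 : E)
    have hx' : 0 < ‖x‖ := norm_pos_iff.2 hx
    have hmem : a + ((ρ / (2 * ‖x‖) : ℝ) : ℂ) • x ∈ ball a ρ := by
      rw [mem_ball, dist_eq_norm, add_sub_cancel_left, norm_smul, Complex.norm_real,
        Real.norm_of_nonneg (by positivity)]
      field_simp
      linarith
    have := isOpen_ball.is_const_of_fderiv_eq_zero (convex_ball a ρ).isPreconnected
      (hf.mono hρU) (fun z hz => hall z hz) hmem (mem_ball_self hρ)
    have := hinj (hρU hmem) ha this
    simp [hx, hρ.ne'] at this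
  set D : (E → ℂ) → E → ℂ := fun g z => fderiv ℂ g z v with hD
  have hDd : ∀ k, DifferentiableOn ℂ (D^[k] h) (ball a ρ) := by
    intro k
    induction k with
    | zero => exact hhB
    | succ k ih =>
      rw [Function.iterate_succ_apply']
      exact differentiableOn_fderiv_apply isOpen_ball ih v
  obtain ⟨k, hk, b, hb, hb0, hbk⟩ : ∃ k, (∀ z ∈ ball a ρ, h z = 0 → D^[k] h z = 0) ∧
      ∃ b ∈ ball a ρ, h b = 0 ∧ D^[k + 1] h b ≠ 0 := by
    by_contra! hcon
    refine hv0 (eq_zero_of_iterate_fderiv_eq_zero hhB hv fun k => ?_)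
    suffices ∀ k, ∀ z ∈ ball a ρ, h z = 0 → D^[k] h z = 0 from this k a (mem_ball_self hρ) hha
    intro k
    induction k with
    | zero => exact fun z _ hz => hz
    | succ k ih => exact hcon k ih
  set g := D^[k] h with hg
  set L := fderiv ℂ g b with hL
  have hLv : L v ≠ 0 := by
    rw [Function.iterate_succ_apply'] at hbk
    exact hbk
  have hv_pos : 0 < ‖v‖ := norm_pos_iff.2 fun h => hLv (by rw [h, map_zero])
  obtain ⟨u, hu, hLu⟩ : ∃ u, u ≠ 0 ∧ L u = 0 := by
    by_contra! hcon
    have : Function.Injective (L : E →ₗ[ℂ] ℂ) := (injective_iff_map_eq_zero _).2 fun x hx => by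
      by_contra hx0
      exact hcon x hx0 hx
    have := LinearMap.finrank_le_finrank_of_injective this
    simp at this
    omega
  -- the strict derivative of `g` at `b`
  have hstrict : HasStrictFDerivAt g L b :=
    (contDiffAt_one_of_differentiableOn isOpen_ball (hDd k) hb).hasStrictFDerivAt one_ne_zero
  have hLv_pos : 0 < ‖L v‖ := norm_pos_iff.2 hLv
  obtain ⟨N, hN, happ⟩ := hstrict.approximates_deriv_on_nhds
    (c := Real.toNNReal (‖L v‖ / (2 * ‖v‖)))
    (Or.inr (Real.toNNReal_pos.2 (by positivity)))
  obtain ⟨ρ', hρ', hball⟩ := Metric.mem_nhds_iff.1 (inter_mem hN (isOpen_ball.mem_nhds hb))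
  -- zeros of the Jacobian on nearby lines
  have hline : AnalyticAt ℂ (fun s : ℂ => h (b + s • v)) 0 := by
    have hcont : Continuous fun s : ℂ => b + s • v := by fun_prop
    have hd : DifferentiableOn ℂ (fun s : ℂ => h (b + s • v))
        ((fun s : ℂ => b + s • v) ⁻¹' ball a ρ) :=
      hhB.comp (by fun_prop) fun s hs => hs
    exact hd.analyticAt ((isOpen_ball.preimage hcont).mem_nhds (by simpa using hb))
  have hline_ne : ∀ᶠ s : ℂ in 𝓝[≠] 0, h (b + s • v) ≠ 0 := by
    refine hline.eventually_eq_zero_or_eventually_ne_zero.resolve_left fun hev => hbk ?_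
    have := iteratedDeriv_line_eq isOpen_ball hhB b v (k + 1) (s := 0) (by simpa using hb)
    rw [zero_smul, add_zero] at this
    rw [← this, (show (fun s : ℂ => h (b + s • v)) =ᶠ[𝓝 0] fun _ => 0 from hev).iteratedDeriv_eq]
    simp
  obtain ⟨r₀, hr₀, hr₀ne⟩ := Metric.eventually_nhds_iff_ball.1 (eventually_nhdsWithin_iff.1 hline_ne)
  obtain ⟨r, hr, hrr₀, hrv⟩ : ∃ r : ℝ, 0 < r ∧ r < r₀ ∧ r * ‖v‖ < ρ' / 2 := by
    refine ⟨min (r₀ / 2) (ρ' / (4 * ‖v‖)), by positivity,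
      (min_le_left _ _).trans_lt (by linarith), ?_⟩
    refine (mul_le_mul_of_nonneg_right (min_le_right _ _) hv_pos.le).trans_lt ?_
    field_simp
    linarith
  have hmemρ : ∀ τ : ℝ, |τ| * ‖u‖ < ρ' / 2 → ∀ s ∈ closedBall (0 : ℂ) r,
      b + (τ : ℂ) • u + s • v ∈ ball b ρ' := by
    intro τ hτ s hs
    rw [mem_closedBall_zero_iff] at hs
    rw [mem_ball, dist_eq_norm]
    calc ‖b + (τ : ℂ) • u + s • v - b‖ = ‖(τ : ℂ) • u + s • v‖ := by congr 1; abel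
      _ ≤ ‖(τ : ℂ) • u‖ + ‖s • v‖ := norm_add_le _ _
      _ = |τ| * ‖u‖ + ‖s‖ * ‖v‖ := by rw [norm_smul, norm_smul]; simp
      _ < ρ' := by nlinarith [mul_le_mul_of_nonneg_right hs hv_pos.le]
  have hρsub : ball b ρ' ⊆ ball a ρ := fun z hz => (hball hz).2
  have hcontp : ∀ (s : ℂ), s ∈ closedBall (0 : ℂ) r →
      ContinuousAt (fun p : ℝ × ℂ => ‖h (b + (p.1 : ℂ) • u + p.2 • v)‖) (0, s) := by
    intro s hs
    refine ContinuousAt.norm (ContinuousAt.comp (g := h)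
      (f := fun p : ℝ × ℂ => b + (p.1 : ℂ) • u + p.2 • v) ?_ (by fun_prop))
    refine (hhB.differentiableAt (isOpen_ball.mem_nhds (hρsub ?_))).continuousAt
    exact hmemρ 0 (by simpa using hρ') s hs
  obtain ⟨m, hm, hmle⟩ : ∃ m : ℝ, 0 < m ∧ ∀ s ∈ sphere (0 : ℂ) r, m < ‖h (b + s • v)‖ := by
    have hc : ContinuousOn (fun s : ℂ => ‖h (b + s • v)‖) (sphere 0 r) := fun s hs => by
      have := (hcontp s (sphere_subset_closedBall hs)).comp (f := fun s : ℂ => ((0 : ℝ), s))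
        (x := s) (by fun_prop)
      simpa [Function.comp_def] using this.continuousWithinAt
    obtain ⟨s₀, hs₀, hmin⟩ := (isCompact_sphere (0 : ℂ) r).exists_isMinOn
      (NormedSpace.sphere_nonempty.2 hr.le) hc
    have hpos : 0 < ‖h (b + s₀ • v)‖ := norm_pos_iff.2 (hr₀ne s₀
      (sphere_subset_closedBall.trans (closedBall_subset_ball hrr₀) hs₀)
      (fun h0 => by
        rw [h0] at hs₀
        simp [hr.ne] at hs₀))
    exact ⟨‖h (b + s₀ • v)‖ / 2, by positivity, fun s hs => by
      have := isMinOn_iff.1 hmin s hs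
      linarith⟩
  have hev1 : ∀ᶠ τ : ℝ in 𝓝 0, ∀ s ∈ sphere (0 : ℂ) r, m < ‖h (b + (τ : ℂ) • u + s • v)‖ := by
    refine (isCompact_sphere (0 : ℂ) r).eventually_forall_of_forall_eventually fun s hs => ?_
    refine (hcontp s (sphere_subset_closedBall hs)).eventually (lt_mem_nhds ?_)
    simpa using hmle s hs
  have hev2 : ∀ᶠ τ : ℝ in 𝓝 0, ‖h (b + (τ : ℂ) • u + (0 : ℂ) • v)‖ < m := by
    have := (hcontp 0 (mem_closedBall_self hr.le)).comp (f := fun τ : ℝ => (τ, (0 : ℂ)))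
      (x := 0) (by fun_prop)
    refine this.eventually (gt_mem_nhds ?_)
    simpa [hb0] using hm
  have hev3 : ∀ᶠ τ : ℝ in 𝓝 0, |τ| * ‖u‖ < ρ' / 2 := by
    have : Continuous fun τ : ℝ => |τ| * ‖u‖ := by fun_prop
    refine this.continuousAt.eventually (gt_mem_nhds ?_)
    simpa using hρ'
  obtain ⟨η, hη, hηball⟩ := Metric.eventually_nhds_iff_ball.1 (hev1.and (hev2.and hev3))
  have hσ : ∀ τ ∈ ball (0 : ℝ) η, ∃ s ∈ closedBall (0 : ℂ) r,
      h (b + (τ : ℂ) • u + s • v) = 0 := by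
    intro τ hτ
    obtain ⟨h1, h2, h3⟩ := hηball τ hτ
    exact exists_zero_mem_closedBall (f := fun s => h (b + (τ : ℂ) • u + s • v)) hr
      (hhB.comp (by fun_prop) fun s hs => hρsub (hmemρ τ h3 s hs)) h2 h1
  choose! σ hσr hσ0 using hσ
  set γ : ℝ → E := fun τ => b + (τ : ℂ) • u + σ τ • v with hγ
  have hγmem : ∀ τ ∈ ball (0 : ℝ) η, γ τ ∈ ball b ρ' := fun τ hτ =>
    hmemρ τ (hηball τ hτ).2.2 _ (hσr τ hτ)
  have hγU : ∀ τ ∈ ball (0 : ℝ) η, γ τ ∈ U := fun τ hτ => hρU (hρsub (hγmem τ hτ))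
  have hγsub : ∀ τ τ' : ℝ, γ τ - γ τ' = ((τ - τ' : ℝ) : ℂ) • u + (σ τ - σ τ') • v := by
    intro τ τ'
    simp only [hγ, Complex.ofReal_sub, sub_smul]
    abel
  have hLip : ∀ τ ∈ ball (0 : ℝ) η, ∀ τ' ∈ ball (0 : ℝ) η,
      ‖γ τ - γ τ'‖ ≤ 2 * ‖u‖ * |τ - τ'| := by
    intro τ hτ τ' hτ'
    have h1 := happ _ (hball (hγmem τ hτ)).1 _ (hball (hγmem τ' hτ')).1
    rw [hk _ (hρsub (hγmem τ hτ)) (hσ0 τ hτ), hk _ (hρsub (hγmem τ' hτ')) (hσ0 τ' hτ')] at h1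
    have h2 : L (γ τ - γ τ') = (σ τ - σ τ') • L v := by
      rw [hγsub, map_add, map_smul, map_smul, hLu, smul_zero, zero_add]
    rw [h2, sub_self, zero_sub, norm_neg, norm_smul] at h1
    rw [Real.coe_toNNReal _ (by positivity)] at h1
    have h3 : ‖σ τ - σ τ'‖ * ‖v‖ ≤ ‖γ τ - γ τ'‖ / 2 := by
      have : ‖L v‖ / (2 * ‖v‖) * ‖γ τ - γ τ'‖ = (‖γ τ - γ τ'‖ / (2 * ‖v‖)) * ‖L v‖ := by
        field_simp
      rw [this] at h1
      have := le_of_mul_le_mul_right h1 hLv_pos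
      rw [le_div_iff₀ (by positivity)] at this
      linarith
    have h4 : ‖γ τ - γ τ'‖ ≤ |τ - τ'| * ‖u‖ + ‖σ τ - σ τ'‖ * ‖v‖ := by
      rw [hγsub]
      refine (norm_add_le _ _).trans (le_of_eq ?_)
      rw [norm_smul, norm_smul, Complex.norm_real, Real.norm_eq_abs]
    linarith
  have hderiv : ∀ τ ∈ ball (0 : ℝ) η, HasDerivAt (f ∘ γ) 0 τ := by
    intro τ hτ
    have hγc : Tendsto γ (𝓝 τ) (𝓝 (γ τ)) := by
      rw [tendsto_iff_norm_sub_tendsto_zero]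
      have hz : Tendsto (fun τ' : ℝ => 2 * ‖u‖ * |τ' - τ|) (𝓝 τ) (𝓝 0) := by
        have : Continuous fun τ' : ℝ => 2 * ‖u‖ * |τ' - τ| := by fun_prop
        simpa using this.tendsto τ
      refine squeeze_zero' (Eventually.of_forall fun _ => norm_nonneg _) ?_ hz
      filter_upwards [isOpen_ball.mem_nhds hτ] with τ' hτ' using hLip τ' hτ' τ hτ
    have h1 := (hf.differentiableAt (hU.mem_nhds (hγU τ hτ))).hasFDerivAt
    rw [hzero _ (hγU τ hτ) (hσ0 τ hτ), hasFDerivAt_iff_isLittleO] at h1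
    rw [hasDerivAt_iff_isLittleO]
    have h2 := h1.comp_tendsto hγc
    simp only [Function.comp_def, zero_apply, sub_zero] at h2
    simp only [smul_zero, sub_zero, Function.comp_def]
    refine h2.trans_isBigO (Asymptotics.IsBigO.of_bound (2 * ‖u‖) ?_)
    filter_upwards [isOpen_ball.mem_nhds hτ] with τ' hτ' using hLip τ' hτ' τ hτ
  have hη2 : η / 2 ∈ ball (0 : ℝ) η := by
    rw [mem_ball_zero_iff, Real.norm_of_nonneg (by positivity)]; linarith
  have hη0 : (0 : ℝ) ∈ ball (0 : ℝ) η := mem_ball_self hη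
  have hconst := isOpen_ball.is_const_of_deriv_eq_zero (convex_ball (0 : ℝ) η).isPreconnected
    (fun τ hτ => (hderiv τ hτ).differentiableAt.differentiableWithinAt)
    (fun τ hτ => (hderiv τ hτ).deriv) hη2 hη0
  have hγeq := sub_eq_zero.2 (hinj (hγU _ hη2) (hγU _ hη0) hconst)
  rw [hγsub] at hγeq
  have h5 := congrArg L hγeq
  rw [map_add, map_smul, map_smul, hLu, smul_zero, zero_add, map_zero, smul_eq_mul,
    mul_eq_zero, or_iff_left hLv] at h5
  rw [h5, zero_smul, add_zero, smul_eq_zero, or_iff_left hu] at hγeq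
  simp [hη.ne'] at hγeq

/-- A holomorphic map whose derivative at a point is nonzero, followed by a functional `ℓ` that sees
the derivative, restricts to a holomorphic map between the kernels of `ℓ ∘ f'(a)` and `ℓ`. -/
theorem exists_restrict_to_level {G : Type*} [NormedAddCommGroup G] [NormedSpace ℂ G]
    {f : E → G} {U : Set E} (hU : IsOpen U) (hf : DifferentiableOn ℂ f U)
    (hinj : InjOn f U) {a : E} (ha : a ∈ U) {ℓ : G →L[ℂ] ℂ}
    {w : E} (hw : ℓ (fderiv ℂ f a w) = 1) :
    ∃ (V : Set (ℓ ∘L fderiv ℂ f a).ker) (φ : (ℓ ∘L fderiv ℂ f a).ker → ℓ.ker),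
      IsOpen V ∧ (0 : (ℓ ∘L fderiv ℂ f a).ker) ∈ V ∧ DifferentiableOn ℂ φ V ∧ InjOn φ V ∧
      ∀ y : (ℓ ∘L fderiv ℂ f a).ker, fderiv ℂ f a y = 0 → fderiv ℂ φ 0 y = 0 := by
  have : CompleteSpace E := FiniteDimensional.complete ℂ E
  set A := fderiv ℂ f a with hA
  set lam : E →L[ℂ] ℂ := ℓ ∘L A with hlam
  have hlamw : lam w = 1 := hw
  have hfa : HasFDerivAt f A a := (hf.differentiableAt (hU.mem_nhds ha)).hasFDerivAt
  let Ψ : E → E := fun z => z + (ℓ (f z) - ℓ (f a) - lam (z - a)) • w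
  have hΨd : DifferentiableOn ℂ Ψ U := by
    refine differentiableOn_id.add (DifferentiableOn.smul_const ?_ w)
    exact ((ℓ.differentiable.comp_differentiableOn hf).sub_const _).sub
      (lam.differentiable.comp_differentiableOn (differentiableOn_id.sub_const a))
  have hΨa : Ψ a = a := by simp [Ψ]
  have hΨ' : HasFDerivAt Ψ ((ContinuousLinearEquiv.refl ℂ E : E ≃L[ℂ] E) : E →L[ℂ] E) a := by
    have h1 : HasFDerivAt (fun z => ℓ (f z) - ℓ (f a) - lam (z - a)) (lam - lam) a :=
      ((ℓ.hasFDerivAt.comp a hfa).sub_const _).sub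
        (lam.hasFDerivAt.comp a ((hasFDerivAt_id a).sub_const a))
    refine ((hasFDerivAt_id a).fun_add (h1.smul_const w)).congr_fderiv ?_
    ext x
    simp
  have hΨC : ContDiffAt ℂ 1 Ψ a := contDiffAt_one_of_differentiableOn hU hΨd ha
  let Θ := hΨC.localInverse hΨ' one_ne_zero
  have hΘC : ContDiffAt ℂ 1 Θ a := by
    have := hΨC.to_localInverse hΨ' one_ne_zero
    rwa [hΨa] at this
  have hst : HasStrictFDerivAt Ψ ((ContinuousLinearEquiv.refl ℂ E : E ≃L[ℂ] E) : E →L[ℂ] E) a :=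
    hΨC.hasStrictFDerivAt' hΨ' one_ne_zero
  have hΘ' : HasFDerivAt Θ (ContinuousLinearMap.id ℂ E) a := by
    have := hst.to_localInverse.hasFDerivAt
    rw [hΨa] at this
    exact this
  have hΘa : Θ a = a := by
    have := hst.localInverse_apply_image
    rwa [hΨa] at this
  have hright : ∀ᶠ y in 𝓝 a, Ψ (Θ y) = y := by
    have := hst.eventually_right_inverse
    rwa [hΨa] at this
  have hdiff : ∀ᶠ y in 𝓝 a, DifferentiableAt ℂ Θ y :=
    (hΘC.eventually (by simp)).mono fun y hy => hy.differentiableAt one_ne_zero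
  have hmemU : ∀ᶠ y in 𝓝 a, Θ y ∈ U :=
    hΘC.continuousAt.eventually (by rw [hΘa]; exact hU.eventually_mem ha)
  obtain ⟨ρ, hρ, hball⟩ := Metric.eventually_nhds_iff_ball.1 (hright.and (hdiff.and hmemU))
  let w' : G := A w
  have hw' : ℓ w' = 1 := hw
  let P : G →L[ℂ] ℓ.ker := ((ContinuousLinearMap.id ℂ G) - ℓ.smulRight w').codRestrict ℓ.ker
    (fun x => by simp [LinearMap.mem_ker, hw'])
  have hP : ∀ x, ((P x : ℓ.ker) : G) = x - ℓ x • w' := fun x => rfl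
  let incl : lam.ker → E := fun y => a + y
  have hincl : Continuous incl := by fun_prop
  have hlevel : ∀ y : lam.ker, incl y ∈ ball a ρ → ℓ (f (Θ (incl y)) - f a) = 0 := by
    intro y hy
    have h1 := congrArg (fun z => lam (z - a)) (hball _ hy).1
    have h2 : lam (y : E) = 0 := y.2
    simp only [Ψ, incl, add_sub_cancel_left, h2] at h1
    rw [add_sub_right_comm, map_add, map_smul, hlamw, smul_eq_mul, mul_one] at h1
    rw [map_sub]
    linear_combination h1
  refine ⟨incl ⁻¹' ball a ρ, fun y => P (f (Θ (incl y)) - f a), isOpen_ball.preimage hincl,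
    by simp [incl, hρ], fun y hy => ?_, fun y hy y' hy' hyy => ?_, fun y hy => ?_⟩
  · obtain ⟨-, h2, h3⟩ := hball _ hy
    have hi : DifferentiableAt ℂ incl y := (lam.ker.subtypeL.differentiableAt).const_add a
    have h4 : DifferentiableAt ℂ (fun y => f (Θ (incl y))) y :=
      (hf.differentiableAt (hU.mem_nhds h3)).comp (f := fun y => Θ (incl y)) y (h2.comp y hi)
    exact (P.differentiableAt.comp y (h4.sub_const (f a))).differentiableWithinAt
  · have h1 := congrArg (Subtype.val) hyy
    simp only [hP, hlevel y hy, hlevel y' hy', zero_smul, sub_zero, sub_left_inj] at h1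
    have h2 := hinj (hball _ hy).2.2 (hball _ hy').2.2 h1
    have h3 := congrArg Ψ h2
    rw [(hball _ hy).1, (hball _ hy').1] at h3
    exact Subtype.ext (add_left_cancel h3)
  · have hi : HasFDerivAt incl lam.ker.subtypeL 0 := (lam.ker.subtypeL.hasFDerivAt).const_add a
    have hi0 : incl 0 = a := by simp [incl]
    have h1 : HasFDerivAt (fun y => Θ (incl y)) (ContinuousLinearMap.id ℂ E ∘L lam.ker.subtypeL) 0 :=
      HasFDerivAt.comp (g := Θ) 0 (by rw [hi0]; exact hΘ') hi
    have h2 : HasFDerivAt (fun y => f (Θ (incl y)))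
        (A ∘L (ContinuousLinearMap.id ℂ E ∘L lam.ker.subtypeL)) 0 :=
      HasFDerivAt.comp (g := f) (f := fun y => Θ (incl y)) 0 (by rw [hi0, hΘa]; exact hfa) h1
    have h3 : HasFDerivAt (fun y => P (f (Θ (incl y)) - f a))
        (P ∘L (A ∘L (ContinuousLinearMap.id ℂ E ∘L lam.ker.subtypeL))) 0 :=
      P.hasFDerivAt.comp (g := P) (f := fun y => f (Θ (incl y)) - f a) 0 (h2.sub_const (f a))
    rw [h3.fderiv]
    simp [hy]

end Osgood

theorem finrank_ker_add_one_of_apply_eq_one {G : Type*} [NormedAddCommGroup G] [NormedSpace ℂ G]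
    [FiniteDimensional ℂ G] (m : G →L[ℂ] ℂ) {x : G} (hx : m x = 1) :
    Module.finrank ℂ m.ker + 1 = Module.finrank ℂ G := by
  refine Module.Dual.finrank_ker_add_one_of_ne_zero (f := (m : G →ₗ[ℂ] ℂ)) fun h => ?_
  have := LinearMap.congr_fun h x
  simp [hx] at this

/-- **Osgood's theorem**: an injective holomorphic map between spaces of the same finite dimension
is immersive. -/
theorem injective_fderiv_of_injOn {E F : Type*} [NormedAddCommGroup E] [NormedSpace ℂ E]
    [FiniteDimensional ℂ E] [NormedAddCommGroup F] [NormedSpace ℂ F] [FiniteDimensional ℂ F]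
    (hdim : Module.finrank ℂ E = Module.finrank ℂ F) {f : E → F} {U : Set E} (hU : IsOpen U)
    (hf : DifferentiableOn ℂ f U) (hinj : InjOn f U) {a : E} (ha : a ∈ U) :
    Function.Injective (fderiv ℂ f a) := by
  induction hn : Module.finrank ℂ E using Nat.strong_induction_on generalizing E F with
  | _ n ih =>
  have hreg : ∀ z ∈ U, fderiv ℂ f z ≠ 0 → Function.Injective (fderiv ℂ f z) := by
    intro z hz hne
    obtain ⟨w₀, hw₀⟩ : ∃ w, fderiv ℂ f z w ≠ 0 := by
      by_contra! h
      exact hne (ContinuousLinearMap.ext h)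
    obtain ⟨ℓ, hℓ⟩ : ∃ ℓ : F →L[ℂ] ℂ, ℓ (fderiv ℂ f z w₀) = 1 :=
      SeparatingDual.exists_eq_one hw₀
    obtain ⟨V, φ, hV, h0V, hφ, hφinj, hker⟩ := exists_restrict_to_level hU hf hinj hz hℓ
    have hk1 := finrank_ker_add_one_of_apply_eq_one (ℓ ∘L fderiv ℂ f z) hℓ
    have hk2 := finrank_ker_add_one_of_apply_eq_one ℓ hℓ
    have hinj0 := ih _ (by omega) (by omega) hV hφ hφinj h0V rfl
    refine (injective_iff_map_eq_zero _).2 fun x hx => ?_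
    have hxker : x ∈ (ℓ ∘L fderiv ℂ f z).ker := by simp [LinearMap.mem_ker, hx]
    have := (injective_iff_map_eq_zero _).1 hinj0 ⟨x, hxker⟩ (hker ⟨x, hxker⟩ hx)
    exact congrArg Subtype.val this
  by_cases h0 : fderiv ℂ f a = 0
  · rcases lt_trichotomy n 1 with h | h | h
    · have : Subsingleton E := Module.finrank_zero_iff.1 (by omega : Module.finrank ℂ E = 0)
      exact Function.injective_of_subsingleton _
    · exfalso
      let e : F ≃L[ℂ] ℂ := ContinuousLinearEquiv.ofFinrankEq (by simp; omega)
      let e' : ℂ ≃L[ℂ] E := ContinuousLinearEquiv.ofFinrankEq (by simp; omega)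
      have hd : DifferentiableOn ℂ (fun s => e (f (e' s))) (e' ⁻¹' U) :=
        e.differentiable.comp_differentiableOn
          (hf.comp e'.differentiable.differentiableOn fun s hs => hs)
      refine deriv_ne_zero_of_injOn (hU.preimage e'.continuous) hd
        (fun s hs t ht hst => e'.injective (hinj hs ht (e.injective hst)))
        (a := e'.symm a) (by simpa using ha) ?_
      have hfa : HasFDerivAt f (0 : E →L[ℂ] F) (e' (e'.symm a)) := by
        rw [e'.apply_symm_apply, ← h0]
        exact (hf.differentiableAt (hU.mem_nhds ha)).hasFDerivAt
      have h1 : HasFDerivAt (fun s => e (f (e' s))) _ (e'.symm a) :=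
        e.hasFDerivAt.comp (e'.symm a) (hfa.comp (e'.symm a) e'.hasFDerivAt)
      rw [h1.hasDerivAt.deriv]
      simp
    · exact absurd h0 (fderiv_ne_zero_of_injOn hdim (by omega) hU hf hinj
        (fun z hz hz' => by_contra fun hne => hz' (hreg z hz hne)) ha)
  · exact hreg a ha h0

section LocallyUniformClosure

variable {E F : Type*} [NormedAddCommGroup E] [NormedAddCommGroup F]

/-- First-order expansion, uniform on balls, of a family with jointly continuous derivative in the
parameter. -/
theorem exists_forall_norm_sub_sub_smul_le [ProperSpace E] [NormedSpace ℝ F] {G D : ℝ → E → F}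
    (hG : ∀ s w, HasDerivAt (fun s => G s w) (D s w) s)
    (hD : Continuous fun p : ℝ × E => D p.1 p.2) (R : ℝ) {ε : ℝ} (hε : 0 < ε) :
    ∃ s₀ > 0, ∀ s ∈ Icc 0 s₀, ∀ w, ‖w‖ ≤ R → ‖G s w - G 0 w - s • D 0 w‖ ≤ ε * s := by
  have huc := (isCompact_Icc (a := (0 : ℝ)) (b := 1)).prod (isCompact_closedBall (0 : E) R)
    |>.uniformContinuousOn_of_continuous hD.continuousOn
  obtain ⟨δ, hδ, H⟩ := Metric.uniformContinuousOn_iff.1 huc ε hε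
  refine ⟨min (δ / 2) 1, by positivity, fun s hs w hw => ?_⟩
  have hw' : w ∈ closedBall (0 : E) R := by simpa using hw
  have key := norm_image_sub_le_of_norm_deriv_le_segment' (a := 0) (b := s) (C := ε)
    (f := fun s => G s w - s • D 0 w) (f' := fun s => D s w - (1 : ℝ) • D 0 w)
    (fun x _ => ((hG x w).sub ((hasDerivAt_id x).smul_const (D 0 w))).hasDerivWithinAt)
    (fun x hx => by
      rw [one_smul, ← dist_eq_norm]
      have h1 : x ≤ 1 := hx.2.le.trans (hs.2.trans (min_le_right _ _))
      have h2 : x ≤ δ / 2 := hx.2.le.trans (hs.2.trans (min_le_left _ _))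
      refine (H (x, w) ⟨⟨hx.1, h1⟩, hw'⟩ (0, w) ⟨⟨le_rfl, zero_le_one⟩, hw'⟩ ?_).le
      rw [dist_prod_same_right, Real.dist_eq, sub_zero, abs_of_nonneg hx.1]
      linarith) s ⟨hs.1, le_rfl⟩
  simp only [zero_smul, sub_zero] at key
  rwa [sub_right_comm]

variable [NormedSpace ℂ F]

/-- The closure of a space of maps under locally uniform convergence. -/
def locUnifClosure (S : Submodule ℂ (E → F)) : Submodule ℂ (E → F) where
  carrier := {V | ∀ R ε : ℝ, 0 < ε → ∃ W ∈ S, ∀ w, ‖w‖ ≤ R → ‖V w - W w‖ ≤ ε}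
  zero_mem' := fun R ε hε => ⟨0, S.zero_mem, fun w _ => by simpa using hε.le⟩
  add_mem' := by
    intro V V' hV hV' R ε hε
    obtain ⟨W, hW, h⟩ := hV R (ε / 2) (by positivity)
    obtain ⟨W', hW', h'⟩ := hV' R (ε / 2) (by positivity)
    refine ⟨W + W', S.add_mem hW hW', fun w hw => ?_⟩
    calc ‖(V + V') w - (W + W') w‖ = ‖(V w - W w) + (V' w - W' w)‖ := by
          simp only [Pi.add_apply]; congr 1; abel
      _ ≤ ε := (norm_add_le _ _).trans (by linarith [h w hw, h' w hw])
  smul_mem' := by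
    intro c V hV R ε hε
    obtain ⟨W, hW, h⟩ := hV R (ε / (‖c‖ + 1)) (by positivity)
    refine ⟨c • W, S.smul_mem c hW, fun w hw => ?_⟩
    rw [Pi.smul_apply, Pi.smul_apply, ← smul_sub, norm_smul]
    calc ‖c‖ * ‖V w - W w‖ ≤ (‖c‖ + 1) * (ε / (‖c‖ + 1)) :=
          mul_le_mul (by linarith) (h w hw) (norm_nonneg _) (by positivity)
      _ = ε := by field_simp

variable {S : Submodule ℂ (E → F)}

theorem mem_locUnifClosure_of_mem {V : E → F} (hV : V ∈ S) : V ∈ locUnifClosure S :=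
  fun _ _ hε => ⟨V, hV, fun w _ => by simpa using hε.le⟩

theorem mem_locUnifClosure_of_approx {V : E → F}
    (h : ∀ R ε : ℝ, 0 < ε → ∃ W ∈ locUnifClosure S, ∀ w, ‖w‖ ≤ R → ‖V w - W w‖ ≤ ε) :
    V ∈ locUnifClosure S := by
  intro R ε hε
  obtain ⟨W, hW, h1⟩ := h R (ε / 2) (by positivity)
  obtain ⟨W', hW', h2⟩ := hW R (ε / 2) (by positivity)
  refine ⟨W', hW', fun w hw => ?_⟩
  calc ‖V w - W' w‖ ≤ ‖V w - W w‖ + ‖W w - W' w‖ := norm_sub_le_norm_sub_add_norm_sub _ _ _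
    _ ≤ ε := by linarith [h1 w hw, h2 w hw]

theorem mem_locUnifClosure_of_hasDerivAt [ProperSpace E] {G D : ℝ → E → F}
    (hG : ∀ s w, HasDerivAt (fun s => G s w) (D s w) s)
    (hD : Continuous fun p : ℝ × E => D p.1 p.2) (hmem : ∀ s, G s ∈ locUnifClosure S) :
    D 0 ∈ locUnifClosure S := by
  refine mem_locUnifClosure_of_approx fun R ε hε => ?_
  obtain ⟨s, hs, h⟩ := exists_forall_norm_sub_sub_smul_le hG hD R hε
  refine ⟨((s⁻¹ : ℝ) : ℂ) • (G s - G 0), Submodule.smul_mem _ _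
    (Submodule.sub_mem _ (hmem s) (hmem 0)), fun w hw => ?_⟩
  have h1 := h s ⟨hs.le, le_rfl⟩ w hw
  have : D 0 w - (((s⁻¹ : ℝ) : ℂ) • (G s - G 0)) w = -(s⁻¹ • (G s w - G 0 w - s • D 0 w)) := by
    rw [Pi.smul_apply, Pi.sub_apply, Complex.coe_smul, smul_sub s⁻¹ _ (s • _),
      inv_smul_smul₀ hs.ne']
    abel
  rw [this, norm_neg, norm_smul, norm_inv, Real.norm_eq_abs, abs_of_pos hs, inv_mul_le_iff₀ hs]
  linarith

end LocallyUniformClosure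

section ExponentialSums

/-- The locally uniform closure of the span of exponentials of linear functionals. -/
noncomputable def expClosure (E : Type*) [NormedAddCommGroup E] [NormedSpace ℂ E] : Submodule ℂ (E → ℂ) :=
  locUnifClosure (Submodule.span ℂ (range fun (ℓ : E →L[ℂ] ℂ) w => Complex.exp (ℓ w)))

variable {E : Type*} [NormedAddCommGroup E] [NormedSpace ℂ E]

theorem exp_mem_expClosure (ℓ : E →L[ℂ] ℂ) : (fun w => Complex.exp (ℓ w)) ∈ expClosure E :=
  mem_locUnifClosure_of_mem (Submodule.subset_span ⟨ℓ, rfl⟩)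

theorem exp_mul_mem_expClosure (ℓ : E →L[ℂ] ℂ) {g : E → ℂ} (hg : g ∈ expClosure E) :
    (fun w => Complex.exp (ℓ w) * g w) ∈ expClosure E := by
  intro R ε hε
  obtain ⟨W, hW, h⟩ := hg R (ε / Real.exp (‖ℓ‖ * R)) (by positivity)
  refine ⟨fun w => Complex.exp (ℓ w) * W w, ?_, fun w hw => ?_⟩
  · clear h
    induction hW using Submodule.span_induction with
    | mem x hx =>
      obtain ⟨m, rfl⟩ := hx
      refine Submodule.subset_span ⟨ℓ + m, ?_⟩
      funext w
      simp [Complex.exp_add]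
    | zero =>
      convert Submodule.zero_mem _ using 1
      funext w
      simp
    | add x y _ _ hx hy =>
      convert Submodule.add_mem _ hx hy using 1
      funext w
      simp [mul_add]
    | smul a x _ hx =>
      convert Submodule.smul_mem _ a hx using 1
      funext w
      simp [mul_left_comm]
  · rw [← mul_sub, norm_mul, Complex.norm_exp]
    have h1 : (ℓ w).re ≤ ‖ℓ‖ * R := (Complex.re_le_norm _).trans
      ((ℓ.le_opNorm w).trans (by gcongr))
    calc Real.exp (ℓ w).re * ‖g w - W w‖
        ≤ Real.exp (‖ℓ‖ * R) * (ε / Real.exp (‖ℓ‖ * R)) :=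
          mul_le_mul (Real.exp_le_exp.2 h1) (h w hw) (norm_nonneg _) (by positivity)
      _ = ε := by field_simp

theorem apply_mul_mem_expClosure [ProperSpace E] (ℓ : E →L[ℂ] ℂ) {g : E → ℂ} (hg : g ∈ expClosure E)
    (hgc : Continuous g) : (fun w => ℓ w * g w) ∈ expClosure E := by
  have := mem_locUnifClosure_of_hasDerivAt (E := E) (F := ℂ)
    (S := Submodule.span ℂ (range fun (ℓ : E →L[ℂ] ℂ) w => Complex.exp (ℓ w)))
    (G := fun s w => Complex.exp (((s : ℂ) • ℓ) w) * g w)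
    (D := fun s w => Complex.exp ((s : ℂ) * ℓ w) * ℓ w * g w) (fun s w => ?_) (by fun_prop)
    (fun s => exp_mul_mem_expClosure _ hg)
  · simp only [Complex.ofReal_zero, zero_mul, Complex.exp_zero, one_mul] at this
    exact this
  · have h1 : HasDerivAt (fun s : ℝ => (s : ℂ) * ℓ w) (ℓ w) s := by
      simpa using (Complex.ofRealCLM.hasDerivAt (x := s)).mul_const (ℓ w)
    simpa using h1.cexp.mul_const (g w)

theorem apply_pow_mul_mem_expClosure [ProperSpace E] (ℓ : E →L[ℂ] ℂ) {g : E → ℂ}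
    (hg : g ∈ expClosure E) (hgc : Continuous g) (k : ℕ) :
    (fun w => ℓ w ^ k * g w) ∈ expClosure E := by
  induction k with
  | zero => simpa using hg
  | succ k ih => simpa [pow_succ', mul_assoc] using apply_mul_mem_expClosure ℓ ih (by fun_prop)

/-- Power series expansion of an entire function in one direction, uniformly on balls. -/
theorem tendstoUniformlyOn_taylor_line [FiniteDimensional ℂ E] {g : E → ℂ} (hg : Differentiable ℂ g)
    (ℓ : E →L[ℂ] ℂ) (v : E) (R : ℝ) :
    TendstoUniformlyOn
      (fun N w => ∑ k ∈ Finset.range N,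
        ℓ w ^ k * ((k.factorial : ℂ)⁻¹ * iteratedDeriv k (fun s : ℂ => g (w - ℓ w • v + s • v)) 0))
      g atTop (closedBall (0 : E) R) := by
  have : ProperSpace E := FiniteDimensional.proper ℂ E
  set ρ : ℝ := ‖ℓ‖ * |R| + 1 with hρ
  have hρ0 : 0 < ρ := by positivity
  set R' : ℝ := |R| + (‖ℓ‖ * |R|) * ‖v‖ + 2 * ρ * ‖v‖
  obtain ⟨M, hM⟩ := (isCompact_closedBall (0 : E) R').exists_bound_of_continuousOn
    hg.continuous.continuousOn
  have hwR : ∀ w ∈ closedBall (0 : E) R, ‖w‖ ≤ |R| := fun w hw =>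
    (by simpa using hw : ‖w‖ ≤ R).trans (le_abs_self R)
  have hℓ : ∀ w ∈ closedBall (0 : E) R, ‖ℓ w‖ ≤ ‖ℓ‖ * |R| := fun w hw =>
    (ℓ.le_opNorm w).trans (by gcongr; exact hwR w hw)
  have hline : ∀ w, Differentiable ℂ fun s : ℂ => g (w - ℓ w • v + s • v) := fun w =>
    hg.comp (by fun_prop)
  have hsum : EqOn (fun w => ∑' k : ℕ, ℓ w ^ k *
      ((k.factorial : ℂ)⁻¹ * iteratedDeriv k (fun s : ℂ => g (w - ℓ w • v + s • v)) 0)) g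
      (closedBall (0 : E) R) := by
    intro w _
    have := Complex.taylorSeries_eq_of_entire' 0 (ℓ w) (hline w)
    simp only [sub_zero, sub_add_cancel] at this
    rw [← this]
    refine tsum_congr fun k => ?_
    ring
  refine TendstoUniformlyOn.congr_right (tendstoUniformlyOn_tsum_nat (u := fun k => M * (1 / 2) ^ k)
    (summable_geometric_two.mul_left M) fun k w hw => ?_) hsum
  have hc : ‖iteratedDeriv k (fun s : ℂ => g (w - ℓ w • v + s • v)) 0‖
      ≤ k.factorial * M / (2 * ρ) ^ k := by
    refine Complex.norm_iteratedDeriv_le_of_forall_mem_sphere_norm_le k (by positivity)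
      (hline w).diffContOnCl fun s hs => hM _ ?_
    rw [mem_closedBall_zero_iff]
    have hs' : ‖s‖ = 2 * ρ := by simpa using hs
    calc ‖w - ℓ w • v + s • v‖ ≤ ‖w‖ + ‖ℓ w • v‖ + ‖s • v‖ :=
          (norm_add_le _ _).trans (by gcongr; exact norm_sub_le _ _)
      _ = ‖w‖ + ‖ℓ w‖ * ‖v‖ + 2 * ρ * ‖v‖ := by rw [norm_smul, norm_smul, hs']
      _ ≤ R' := by exact add_le_add_left (add_le_add (hwR w hw)
          (mul_le_mul_of_nonneg_right (hℓ w hw) (norm_nonneg v))) _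
  have hM0 : 0 ≤ M := (norm_nonneg _).trans (hM 0 (mem_closedBall_self (by positivity)))
  calc ‖ℓ w ^ k * ((k.factorial : ℂ)⁻¹ * iteratedDeriv k (fun s : ℂ => g (w - ℓ w • v + s • v)) 0)‖
      = ‖ℓ w‖ ^ k * ((k.factorial : ℝ)⁻¹ *
          ‖iteratedDeriv k (fun s : ℂ => g (w - ℓ w • v + s • v)) 0‖) := by simp
    _ ≤ ρ ^ k * ((k.factorial : ℝ)⁻¹ * (k.factorial * M / (2 * ρ) ^ k)) := by
        gcongr
        linarith [hℓ w hw]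
    _ = M * (1 / 2) ^ k := by
        have : (k.factorial : ℝ) ≠ 0 := by positivity
        rw [mul_pow, div_pow, one_pow]
        field_simp

/-- Entire functions are locally uniform limits of exponential sums. -/
theorem mem_expClosure_of_differentiable {n : ℕ} {g : EuclideanSpace ℂ (Fin n) → ℂ}
    (hg : Differentiable ℂ g) : g ∈ expClosure (EuclideanSpace ℂ (Fin n)) := by
  suffices H : ∀ (S : Finset (Fin n)) (g : EuclideanSpace ℂ (Fin n) → ℂ), Differentiable ℂ g →
      (∀ w w', (∀ i ∈ S, w i = w' i) → g w = g w') → g ∈ expClosure (EuclideanSpace ℂ (Fin n)) from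
    H Finset.univ g hg fun w w' h => by
      rw [show w = w' from by ext i; exact h i (Finset.mem_univ i)]
  intro S
  induction S using Finset.induction_on with
  | empty =>
    intro g _ h
    convert Submodule.smul_mem _ (g 0) (exp_mem_expClosure (0 : EuclideanSpace ℂ (Fin n) →L[ℂ] ℂ))
      using 1
    funext w
    simpa using h w 0 (by simp)
  | insert i S hi ih =>
    intro g hg hdep
    set v : EuclideanSpace ℂ (Fin n) := EuclideanSpace.single i 1
    set ℓ : EuclideanSpace ℂ (Fin n) →L[ℂ] ℂ := EuclideanSpace.proj i
    have hcd : ∀ k, Differentiable ℂ fun w =>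
        (k.factorial : ℂ)⁻¹ * iteratedDeriv k (fun s : ℂ => g (w - ℓ w • v + s • v)) 0 := by
      intro k
      have h1 : ∀ w, iteratedDeriv k (fun s : ℂ => g (w - ℓ w • v + s • v)) 0
          = (fun (g : EuclideanSpace ℂ (Fin n) → ℂ) z => fderiv ℂ g z v)^[k] g (w - ℓ w • v) :=
        fun w => by
          simpa using iteratedDeriv_line_eq isOpen_univ hg.differentiableOn (w - ℓ w • v) v k
            (s := 0) (mem_univ _)
      simp only [h1]
      exact ((differentiableOn_univ.1 (differentiableOn_iterate_fderiv_apply isOpen_univ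
        hg.differentiableOn v k)).comp (by fun_prop)).const_mul _
    have hcm : ∀ k, (fun w => (k.factorial : ℂ)⁻¹ *
        iteratedDeriv k (fun s : ℂ => g (w - ℓ w • v + s • v)) 0)
          ∈ expClosure (EuclideanSpace ℂ (Fin n)) := by
      refine fun k => ih _ (hcd k) fun w w' hww => ?_
      have : (fun s : ℂ => g (w - ℓ w • v + s • v)) = fun s => g (w' - ℓ w' • v + s • v) := by
        funext s
        refine hdep _ _ fun j hj => ?_
        by_cases hji : j = i
        · subst hji
          simp [v, ℓ]
        · have := hww j (Finset.mem_of_mem_insert_of_ne hj hji)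
          simp [v, ℓ, hji, this]
      simp only [this]
    refine mem_locUnifClosure_of_approx fun R ε hε => ?_
    obtain ⟨N, hN⟩ := (Metric.tendstoUniformlyOn_iff.1
      (tendstoUniformlyOn_taylor_line hg ℓ v R) ε hε).exists
    refine ⟨fun w => ∑ k ∈ Finset.range N, ℓ w ^ k * ((k.factorial : ℂ)⁻¹ *
      iteratedDeriv k (fun s : ℂ => g (w - ℓ w • v + s • v)) 0), ?_, fun w hw => ?_⟩
    · have := Submodule.sum_mem (t := Finset.range N) (expClosure (EuclideanSpace ℂ (Fin n)))
        fun k _ => apply_pow_mul_mem_expClosure ℓ (hcm k) (hcd k).continuous k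
      refine (congrArg (· ∈ expClosure (EuclideanSpace ℂ (Fin n))) ?_).mp this
      funext w
      simp
    · rw [← dist_eq_norm]
      exact (hN w (by simpa using hw)).le

end ExponentialSums

section AutomorphismFlows

variable {n : ℕ}

theorem IsHolomorphicAutomorphism.comp {f g : EuclideanSpace ℂ (Fin n) → EuclideanSpace ℂ (Fin n)}
    (hf : IsHolomorphicAutomorphism f) (hg : IsHolomorphicAutomorphism g) :
    IsHolomorphicAutomorphism (f ∘ g) := by
  obtain ⟨hf, f', hf', hl, hr⟩ := hf
  obtain ⟨hg, g', hg', hl', hr'⟩ := hg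
  exact ⟨hf.comp hg, g' ∘ f', hg'.comp hf', hl.comp hl', hr.comp hr'⟩

theorem isHolomorphicAutomorphism_id :
    IsHolomorphicAutomorphism (id : EuclideanSpace ℂ (Fin n) → EuclideanSpace ℂ (Fin n)) :=
  ⟨differentiable_id, id, differentiable_id, fun _ => rfl, fun _ => rfl⟩

/-- `W` is tangent at time zero to a continuous family of holomorphic automorphisms. -/
def IsAutTangent (W : EuclideanSpace ℂ (Fin n) → EuclideanSpace ℂ (Fin n)) : Prop :=
  Continuous W ∧ ∃ A : ℝ → EuclideanSpace ℂ (Fin n) → EuclideanSpace ℂ (Fin n),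
    (Continuous fun p : ℝ × EuclideanSpace ℂ (Fin n) => A p.1 p.2) ∧ A 0 = id ∧
    (∀ s, IsHolomorphicAutomorphism (A s)) ∧
    ∀ R ε : ℝ, 0 < ε → ∃ s₀ > 0, ∀ s ∈ Icc 0 s₀, ∀ w, ‖w‖ ≤ R →
      ‖A s w - w - s • W w‖ ≤ ε * s

theorem isAutTangent_zero :
    IsAutTangent (0 : EuclideanSpace ℂ (Fin n) → EuclideanSpace ℂ (Fin n)) := by
  refine ⟨continuous_zero, fun _ => id, continuous_snd, rfl, fun _ => isHolomorphicAutomorphism_id,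
    fun R ε hε => ⟨1, one_pos, fun s hs w _ => ?_⟩⟩
  simpa using mul_nonneg hε.le hs.1

theorem IsAutTangent.add {V W : EuclideanSpace ℂ (Fin n) → EuclideanSpace ℂ (Fin n)}
    (hV : IsAutTangent V) (hW : IsAutTangent W) : IsAutTangent (V + W) := by
  obtain ⟨hVc, A, hAc, hA0, hAaut, hA⟩ := hV
  obtain ⟨hWc, B, hBc, hB0, hBaut, hB⟩ := hW
  refine ⟨hVc.add hWc, fun s => A s ∘ B s, hAc.comp (continuous_fst.prodMk hBc), ?_,
    fun s => (hAaut s).comp (hBaut s), fun R ε hε => ?_⟩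
  · simp [hA0, hB0]
  obtain ⟨M, hM⟩ := (isCompact_closedBall (0 : EuclideanSpace ℂ (Fin n)) R)
    |>.exists_bound_of_continuousOn hWc.continuousOn
  have huc := (isCompact_closedBall (0 : EuclideanSpace ℂ (Fin n)) (R + 1))
    |>.uniformContinuousOn_of_continuous hVc.continuousOn
  obtain ⟨δ, hδ, H⟩ := Metric.uniformContinuousOn_iff.1 huc (ε / 3) (by positivity)
  obtain ⟨a, ha, hA⟩ := hA (R + 1) (ε / 3) (by positivity)
  obtain ⟨b, hb, hB⟩ := hB R (ε / 3) (by positivity)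
  set η : ℝ := min δ 1 / (2 * (ε + |M|))
  have hη : 0 < η := by positivity
  refine ⟨min η (min a b), by positivity, fun s hs w hw => ?_⟩
  have hsη : s ≤ η := hs.2.trans (min_le_left _ _)
  have hsa : s ≤ a := hs.2.trans ((min_le_right _ _).trans (min_le_left _ _))
  have hsb : s ≤ b := hs.2.trans ((min_le_right _ _).trans (min_le_right _ _))
  have hBw := hB s ⟨hs.1, hsb⟩ w hw
  have hWw : ‖W w‖ ≤ |M| := (hM w (by simpa using hw)).trans (le_abs_self M)
  have hdist : ‖B s w - w‖ < min δ 1 := by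
    have hpos : 0 < min δ 1 := by positivity
    calc ‖B s w - w‖ = ‖(B s w - w - s • W w) + s • W w‖ := by rw [sub_add_cancel]
      _ ≤ ε / 3 * s + s * ‖W w‖ := (norm_add_le _ _).trans (by
          rw [norm_smul, Real.norm_eq_abs, abs_of_nonneg hs.1]; linarith)
      _ ≤ s * (ε + |M|) := by nlinarith [mul_le_mul_of_nonneg_left hWw hs.1, mul_nonneg hε.le hs.1]
      _ ≤ η * (ε + |M|) := by gcongr
      _ = min δ 1 / 2 := by simp only [η]; field_simp
      _ < min δ 1 := by linarith
  have hBR : ‖B s w‖ ≤ R + 1 := by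
    have := norm_le_norm_add_norm_sub' (B s w) w
    linarith [hdist.trans_le (min_le_right _ _)]
  have hAw := hA s ⟨hs.1, hsa⟩ _ hBR
  have hVw : ‖V (B s w) - V w‖ ≤ ε / 3 := by
    rw [← dist_eq_norm]
    refine (H _ (by simpa using hBR) _ (by simpa using (by linarith : ‖w‖ ≤ R + 1)) ?_).le
    rw [dist_eq_norm]
    exact hdist.trans_le (min_le_left _ _)
  calc ‖(A s ∘ B s) w - w - s • (V + W) w‖
      = ‖(A s (B s w) - B s w - s • V (B s w)) + (B s w - w - s • W w)
          + s • (V (B s w) - V w)‖ := by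
        congr 1
        simp only [Function.comp, Pi.add_apply, smul_add, smul_sub]
        abel
    _ ≤ ε / 3 * s + ε / 3 * s + s * (ε / 3) := by
        refine (norm_add₃_le).trans (add_le_add (add_le_add hAw hBw) ?_)
        rw [norm_smul, Real.norm_eq_abs, abs_of_nonneg hs.1]
        exact mul_le_mul_of_nonneg_left hVw hs.1
    _ = ε * s := by ring

theorem isAutTangent_of_hasDerivAt
    {A D : ℝ → EuclideanSpace ℂ (Fin n) → EuclideanSpace ℂ (Fin n)}
    (hAc : Continuous fun p : ℝ × EuclideanSpace ℂ (Fin n) => A p.1 p.2) (hA0 : A 0 = id)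
    (hAaut : ∀ s, IsHolomorphicAutomorphism (A s))
    (hA : ∀ s w, HasDerivAt (fun s => A s w) (D s w) s)
    (hD : Continuous fun p : ℝ × EuclideanSpace ℂ (Fin n) => D p.1 p.2) : IsAutTangent (D 0) := by
  refine ⟨hD.comp (continuous_const.prodMk continuous_id), A, hAc, hA0, hAaut, fun R ε hε => ?_⟩
  obtain ⟨s₀, hs₀, h⟩ := exists_forall_norm_sub_sub_smul_le hA hD R hε
  exact ⟨s₀, hs₀, fun s hs w hw => by simpa [hA0] using h s hs w hw⟩

theorem isAutTangent_shear {f : ℂ → ℂ} (hf : Differentiable ℂ f)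
    (ℓ : EuclideanSpace ℂ (Fin n) →L[ℂ] ℂ) {v : EuclideanSpace ℂ (Fin n)} (hv : ℓ v = 0) :
    IsAutTangent fun w => f (ℓ w) • v := by
  have hfc := hf.continuous
  have hinv : ∀ (a : ℂ) w, (w + (a * f (ℓ w)) • v)
      + ((-a) * f (ℓ (w + (a * f (ℓ w)) • v))) • v = w := fun a w => by
    simp [hv]
  have hd : ∀ a : ℂ, Differentiable ℂ fun w => w + (a * f (ℓ w)) • v := fun a => by fun_prop
  refine isAutTangent_of_hasDerivAt (A := fun s w => w + ((s : ℂ) * f (ℓ w)) • v)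
    (D := fun _ w => f (ℓ w) • v) (by fun_prop) (by funext w; simp) (fun s => ?_) (fun s w => ?_)
    (by fun_prop)
  · exact ⟨hd s, _, hd (-s), hinv s, fun w => by simpa using hinv (-s) w⟩
  · have h1 : HasDerivAt (fun s : ℝ => (s : ℂ) * f (ℓ w)) (f (ℓ w)) s := by
      simpa using (Complex.ofRealCLM.hasDerivAt (x := s)).mul_const (f (ℓ w))
    exact (h1.smul_const v).const_add w

theorem isAutTangent_overshear {f : ℂ → ℂ} (hf : Differentiable ℂ f)
    (ℓ m : EuclideanSpace ℂ (Fin n) →L[ℂ] ℂ) {v : EuclideanSpace ℂ (Fin n)} (hv : ℓ v = 0)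
    (hm : m v = 1) : IsAutTangent fun w => (f (ℓ w) * m w) • v := by
  have hfc := hf.continuous
  have hinv : ∀ (a : ℂ) w, (w + ((Complex.exp (a * f (ℓ w)) - 1) * m w) • v)
      + ((Complex.exp (-a * f (ℓ (w + ((Complex.exp (a * f (ℓ w)) - 1) * m w) • v))) - 1)
        * m (w + ((Complex.exp (a * f (ℓ w)) - 1) * m w) • v)) • v = w := fun a w => by
    have h1 : ℓ (w + ((Complex.exp (a * f (ℓ w)) - 1) * m w) • v) = ℓ w := by simp [hv]
    rw [h1, map_add, map_smul, hm, neg_mul, Complex.exp_neg, add_assoc, ← add_smul]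
    convert add_zero w
    rw [smul_eq_zero]
    left
    have := Complex.exp_ne_zero (a * f (ℓ w))
    field_simp
    simp only [smul_eq_mul]
    ring
  have hd : ∀ a : ℂ, Differentiable ℂ fun w =>
      w + ((Complex.exp (a * f (ℓ w)) - 1) * m w) • v := fun a => by fun_prop
  have := isAutTangent_of_hasDerivAt
    (A := fun s w => w + ((Complex.exp (s * f (ℓ w)) - 1) * m w) • v)
    (D := fun s w => (Complex.exp (s * f (ℓ w)) * f (ℓ w) * m w) • v) (by fun_prop)
    (by funext w; simp) (fun s => ?_) (fun s w => ?_) (by fun_prop)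
  · simpa using this
  · exact ⟨hd s, _, hd (-s), hinv s, fun w => by simpa using hinv (-s) w⟩
  · have h1 : HasDerivAt (fun s : ℝ => (s : ℂ) * f (ℓ w)) (f (ℓ w)) s := by
      simpa using (Complex.ofRealCLM.hasDerivAt (x := s)).mul_const (f (ℓ w))
    exact (((h1.cexp.sub_const 1).mul_const (m w)).smul_const v).const_add w

/-- Shear and overshear vector fields. -/
def shearFields (n : ℕ) : Set (EuclideanSpace ℂ (Fin n) → EuclideanSpace ℂ (Fin n)) :=
  {W | ∃ (f : ℂ → ℂ) (ℓ : EuclideanSpace ℂ (Fin n) →L[ℂ] ℂ) (v : EuclideanSpace ℂ (Fin n)),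
    Differentiable ℂ f ∧ ℓ v = 0 ∧ ((W = fun w => f (ℓ w) • v) ∨
      ∃ m : EuclideanSpace ℂ (Fin n) →L[ℂ] ℂ, m v = 1 ∧ W = fun w => (f (ℓ w) * m w) • v)}

theorem isAutTangent_of_mem_span {W : EuclideanSpace ℂ (Fin n) → EuclideanSpace ℂ (Fin n)}
    (hW : W ∈ Submodule.span ℂ (shearFields n)) : IsAutTangent W := by
  induction hW using Submodule.closure_induction with
  | zero => exact isAutTangent_zero
  | add x y _ _ hx hy => exact hx.add hy
  | smul_mem r x hx =>
    obtain ⟨f, ℓ, v, hf, hv, rfl | ⟨m, hm, rfl⟩⟩ := hx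
    · convert isAutTangent_shear (hf.const_mul r) ℓ hv using 2 with w
      simp [smul_smul]
    · convert isAutTangent_overshear (hf.const_mul r) ℓ m hv hm using 2 with w
      simp [smul_smul, mul_assoc]

/-- Fields `f (ℓ w) • v` with `ℓ v = 1` are limits of sums of shear and overshear fields. -/
theorem apply_mul_smul_mem_locUnifClosure_shearFields {f : ℂ → ℂ} (hf : Differentiable ℂ f)
    {x y : EuclideanSpace ℂ (Fin n) →L[ℂ] ℂ} {ex ey : EuclideanSpace ℂ (Fin n)} (hxx : x ex = 1)
    (hxy : x ey = 0) (hyx : y ex = 0) (hyy : y ey = 1) :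
    (fun w => (x w * f (x w)) • ex) ∈ locUnifClosure (Submodule.span ℂ (shearFields n)) := by
  have hfc := hf.continuous
  have hf' : Differentiable ℂ (deriv f) := by
    have := differentiableOn_univ.2 hf
    exact differentiableOn_univ.1 (this.deriv isOpen_univ)
  have hfc' := hf'.continuous
  have hmem : ∀ W ∈ shearFields n, W ∈ locUnifClosure (Submodule.span ℂ (shearFields n)) :=
    fun W hW => mem_locUnifClosure_of_mem (Submodule.subset_span hW)
  have h1 := mem_locUnifClosure_of_hasDerivAt (S := Submodule.span ℂ (shearFields n))
    (G := fun τ w => (f ((x + (τ : ℂ) • y) w) * x w) • ((τ : ℂ) • ex - ey))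
    (D := fun τ w => (f ((x + (τ : ℂ) • y) w) * x w) • ex
      + (deriv f ((x + (τ : ℂ) • y) w) * y w * x w) • ((τ : ℂ) • ex - ey)) ?_ ?_ ?_
  · have h2 := hmem (fun w => (x w * deriv f (x w) * y w) • ey)
      ⟨fun z => z * deriv f z, x, ey, by fun_prop, hxy, .inr ⟨y, hyy, rfl⟩⟩
    refine (congrArg (· ∈ locUnifClosure (Submodule.span ℂ (shearFields n))) ?_).mp
      (Submodule.add_mem _ h1 h2)
    funext w
    have h3 : (x + (0 : ℂ) • y) w = x w := by simp
    simp only [h3, Complex.ofReal_zero, zero_smul, zero_sub, smul_neg, Pi.add_apply]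
    rw [mul_comm (x w) (f (x w)), add_assoc, mul_comm (x w) (deriv f _), mul_right_comm,
      neg_add_cancel, add_zero]
  · intro τ w
    have hτ : HasDerivAt (fun τ : ℝ => (τ : ℂ)) 1 τ := 
      Complex.ofRealCLM.hasDerivAt (x := τ)
    have ha : HasDerivAt (fun τ : ℝ => (x + (τ : ℂ) • y) w) (y w) τ := by
      simpa using (hτ.mul_const (y w)).const_add (x w)
    have hb : HasDerivAt (fun τ : ℝ => f ((x + (τ : ℂ) • y) w) * x w)
        (deriv f ((x + (τ : ℂ) • y) w) * y w * x w) τ :=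
      ((hf _).hasDerivAt.comp τ ha).mul_const (x w)
    have hc : HasDerivAt (fun τ : ℝ => (τ : ℂ) • ex - ey) ex τ := by
      simpa using (hτ.smul_const ex).sub_const ey
    exact hb.smul hc
  · simp only [add_apply, smul_apply]
    fun_prop
  · intro τ
    by_cases hτ : τ = 0
    · subst hτ
      refine hmem _ ⟨fun z => -(f z * z), x, ey, by fun_prop, hxy, .inl ?_⟩
      funext w
      simp
    · have hτ' : (τ : ℂ) ≠ 0 := by exact_mod_cast hτ
      refine hmem _ ⟨fun z => τ * f z, x + (τ : ℂ) • y, (τ : ℂ) • ex - ey, by fun_prop, ?_,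
        .inr ⟨(τ : ℂ)⁻¹ • x, ?_, ?_⟩⟩
      · simp [hxx, hxy, hyx, hyy]
      · simp [hxx, hxy, hτ']
      · funext w
        congr 1
        simp only [smul_apply, smul_eq_mul]
        field_simp

theorem exists_dual_pair (hn : 2 ≤ n) (x : EuclideanSpace ℂ (Fin n) →L[ℂ] ℂ)
    {ex : EuclideanSpace ℂ (Fin n)} (hxx : x ex = 1) :
    ∃ (y : EuclideanSpace ℂ (Fin n) →L[ℂ] ℂ) (ey : EuclideanSpace ℂ (Fin n)),
      x ey = 0 ∧ y ex = 0 ∧ y ey = 1 := by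
  obtain ⟨ey, hey, hey0⟩ : ∃ ey, x ey = 0 ∧ ey ≠ 0 := by
    by_contra! h
    have hinj : Function.Injective (x : EuclideanSpace ℂ (Fin n) →ₗ[ℂ] ℂ) :=
      (injective_iff_map_eq_zero _).2 fun w hw => h w hw
    have := LinearMap.finrank_le_finrank_of_injective hinj
    simp at this
    omega
  obtain ⟨φ, hφ⟩ := SeparatingDual.exists_eq_one (R := ℂ) hey0
  exact ⟨φ - φ ex • x, ey, hey, by simp [hxx], by simp [hey, hφ]⟩

theorem exp_smul_mem_locUnifClosure_shearFields (hn : 2 ≤ n)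
    (ℓ : EuclideanSpace ℂ (Fin n) →L[ℂ] ℂ) (v : EuclideanSpace ℂ (Fin n)) :
    (fun w => Complex.exp (ℓ w) • v) ∈ locUnifClosure (Submodule.span ℂ (shearFields n)) := by
  by_cases hv : ℓ v = 0
  · exact mem_locUnifClosure_of_mem (Submodule.subset_span
      ⟨Complex.exp, ℓ, v, Complex.differentiable_exp, hv, .inl rfl⟩)
  have hxx : ℓ ((ℓ v)⁻¹ • v) = 1 := by simp [hv]
  obtain ⟨y, ey, hxy, hyx, hyy⟩ := exists_dual_pair hn ℓ hxx
  have hφ : Differentiable ℂ (dslope Complex.exp 0) :=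
    differentiableOn_univ.1 ((Complex.differentiableOn_dslope univ_mem).2
      (Complex.differentiable_exp.differentiableOn (𝕜 := ℂ)))
  have h1 := apply_mul_smul_mem_locUnifClosure_shearFields hφ hxx hxy hyx hyy
  have h2 : (fun _ => v) ∈ locUnifClosure (Submodule.span ℂ (shearFields n)) :=
    mem_locUnifClosure_of_mem (Submodule.subset_span ⟨fun _ => 1, 0, v, by fun_prop, by simp,
      .inl (by simp)⟩)
  refine (congrArg (· ∈ locUnifClosure (Submodule.span ℂ (shearFields n))) ?_).mp
    (Submodule.add_mem _ (Submodule.smul_mem _ (ℓ v) h1) h2)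
  funext w
  have h3 : ℓ w * dslope Complex.exp 0 (ℓ w) = Complex.exp (ℓ w) - 1 := by
    simpa using sub_smul_dslope Complex.exp 0 (ℓ w)
  simp only [Pi.add_apply, Pi.smul_apply, h3, smul_smul]
  rw [mul_left_comm, mul_inv_cancel₀ hv, mul_one, sub_smul, one_smul, sub_add_cancel]

/-- Locally uniform approximation of entire vector fields by fields tangent to families of
automorphisms. -/
theorem exists_isAutTangent_norm_sub_le (hn : 2 ≤ n)
    {g : EuclideanSpace ℂ (Fin n) → EuclideanSpace ℂ (Fin n)} (hg : Differentiable ℂ g) (R : ℝ)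
    {ε : ℝ} (hε : 0 < ε) : ∃ W, IsAutTangent W ∧ ∀ w, ‖w‖ ≤ R → ‖g w - W w‖ ≤ ε := by
  have hscal : ∀ (v : EuclideanSpace ℂ (Fin n)) (h : EuclideanSpace ℂ (Fin n) → ℂ),
      h ∈ expClosure (EuclideanSpace ℂ (Fin n)) →
      (fun w => h w • v) ∈ locUnifClosure (Submodule.span ℂ (shearFields n)) := by
    intro v h hh
    refine mem_locUnifClosure_of_approx fun R ε hε => ?_
    obtain ⟨W, hW, hle⟩ := hh R (ε / (‖v‖ + 1)) (by positivity)
    refine ⟨fun w => W w • v, ?_, fun w hw => ?_⟩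
    · clear hle
      induction hW using Submodule.span_induction with
      | mem x hx =>
        obtain ⟨ℓ, rfl⟩ := hx
        exact exp_smul_mem_locUnifClosure_shearFields hn ℓ v
      | zero =>
        refine (congrArg (· ∈ locUnifClosure (Submodule.span ℂ (shearFields n))) ?_).mp
          (Submodule.zero_mem _)
        funext w
        simp
      | add x y _ _ hx hy =>
        refine (congrArg (· ∈ locUnifClosure (Submodule.span ℂ (shearFields n))) ?_).mp
          (Submodule.add_mem _ hx hy)
        funext w
        simp [add_smul]
      | smul a x _ hx =>
        refine (congrArg (· ∈ locUnifClosure (Submodule.span ℂ (shearFields n))) ?_).mp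
          (Submodule.smul_mem _ a hx)
        funext w
        simp [smul_smul]
    · rw [← sub_smul, norm_smul]
      calc ‖h w - W w‖ * ‖v‖ ≤ ε / (‖v‖ + 1) * (‖v‖ + 1) :=
            mul_le_mul (hle w hw) (by linarith) (norm_nonneg _) (by positivity)
        _ = ε := by field_simp
  have hsum := Submodule.sum_mem (t := Finset.univ)
    (locUnifClosure (Submodule.span ℂ (shearFields n))) fun i _ =>
      hscal (EuclideanSpace.single i 1) (fun w => g w i) (mem_expClosure_of_differentiable
        ((EuclideanSpace.proj i : EuclideanSpace ℂ (Fin n) →L[ℂ] ℂ).differentiable.comp hg))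
  obtain ⟨W, hW, h⟩ := hsum R ε hε
  refine ⟨W, isAutTangent_of_mem_span hW, fun w hw => ?_⟩
  have hgw : g w = (∑ i : Fin n, fun w => g w i • EuclideanSpace.single i (1 : ℂ)) w := by
    ext j
    simp [Finset.sum_apply, Pi.single_apply]
  rw [hgw]
  exact h w hw

end AutomorphismFlows

section Isotopy

variable {n : ℕ} {Ω K : Set (EuclideanSpace ℂ (Fin n))}
  {Φ : ℝ → EuclideanSpace ℂ (Fin n) → EuclideanSpace ℂ (Fin n)}

/-- A `C¹` isotopy of injective holomorphic maps on an open set. -/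
structure IsHolIsotopy (Ω : Set (EuclideanSpace ℂ (Fin n)))
    (Φ : ℝ → EuclideanSpace ℂ (Fin n) → EuclideanSpace ℂ (Fin n)) : Prop where
  isOpen : IsOpen Ω
  contDiffOn : ContDiffOn ℝ 1
    (fun p : ℝ × EuclideanSpace ℂ (Fin n) => Φ p.1 p.2) (Icc (0 : ℝ) 1 ×ˢ Ω)
  differentiableOn : ∀ t ∈ Icc (0 : ℝ) 1, DifferentiableOn ℂ (Φ t) Ω
  injOn : ∀ t ∈ Icc (0 : ℝ) 1, InjOn (Φ t) Ω

namespace IsHolIsotopy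

/-- The time derivative of the isotopy. -/
theorem exists_velocity (h : IsHolIsotopy Ω Φ) :
    ∃ v : ℝ → EuclideanSpace ℂ (Fin n) → EuclideanSpace ℂ (Fin n),
      ContinuousOn (fun p : ℝ × EuclideanSpace ℂ (Fin n) => v p.1 p.2) (Icc (0 : ℝ) 1 ×ˢ Ω) ∧
      ∀ t ∈ Icc (0 : ℝ) 1, ∀ z ∈ Ω, HasDerivWithinAt (fun t => Φ t z) (v t z) (Icc 0 1) t := by
  have hud : UniqueDiffOn ℝ (Icc (0 : ℝ) 1 ×ˢ Ω) :=
    (uniqueDiffOn_Icc zero_lt_one).prod h.isOpen.uniqueDiffOn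
  refine ⟨fun t z => fderivWithin ℝ (fun p : ℝ × EuclideanSpace ℂ (Fin n) => Φ p.1 p.2)
    (Icc (0 : ℝ) 1 ×ˢ Ω) (t, z) (1, 0), ?_, fun t ht z hz => ?_⟩
  · exact (h.contDiffOn.continuousOn_fderivWithin hud le_rfl).clm_apply continuousOn_const
  · have h1 := ((h.contDiffOn.differentiableOn one_ne_zero) (t, z) ⟨ht, hz⟩).hasFDerivWithinAt
    have hmaps : MapsTo (fun t : ℝ => (t, z)) (Icc 0 1) (Icc (0 : ℝ) 1 ×ˢ Ω) := fun s hs => ⟨hs, hz⟩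
    have h2 : HasDerivWithinAt (fun t : ℝ => (t, z)) (1, 0) (Icc 0 1) t :=
      (hasDerivWithinAt_id t _).prodMk (hasDerivWithinAt_const t _ z)
    exact h1.comp_hasDerivWithinAt t h2 hmaps

/-- Uniform first-order expansion of an isotopy in time on compact sets. -/
theorem exists_forall_norm_sub_sub_smul_le
    {v : ℝ → EuclideanSpace ℂ (Fin n) → EuclideanSpace ℂ (Fin n)}
    (hvc : ContinuousOn (fun p : ℝ × EuclideanSpace ℂ (Fin n) => v p.1 p.2) (Icc (0 : ℝ) 1 ×ˢ Ω))
    (hv : ∀ t ∈ Icc (0 : ℝ) 1, ∀ z ∈ Ω, HasDerivWithinAt (fun t => Φ t z) (v t z) (Icc 0 1) t)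
    (hK : IsCompact K) (hKΩ : K ⊆ Ω) {ε : ℝ} (hε : 0 < ε) :
    ∃ δ > 0, ∀ t ∈ Icc (0 : ℝ) 1, ∀ s ∈ Icc (0 : ℝ) 1, |s - t| < δ → ∀ z ∈ K,
      ‖Φ s z - Φ t z - (s - t) • v t z‖ ≤ ε * |s - t| := by
  have huc := ((isCompact_Icc (a := (0 : ℝ)) (b := 1)).prod hK).uniformContinuousOn_of_continuous
    (hvc.mono (prod_mono_right hKΩ))
  obtain ⟨δ, hδ, H⟩ := Metric.uniformContinuousOn_iff.1 huc ε hε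
  refine ⟨δ, hδ, fun t ht s hs hst z hz => ?_⟩
  have hsub : uIcc t s ⊆ Icc (0 : ℝ) 1 := ordConnected_Icc.uIcc_subset ht hs
  have key := (convex_uIcc t s).norm_image_sub_le_of_norm_hasDerivWithin_le (C := ε)
    (f := fun r => Φ r z - r • v t z) (f' := fun r => v r z - (1 : ℝ) • v t z)
    (fun r hr => (((hv r (hsub hr) z (hKΩ hz)).mono hsub).sub
      ((hasDerivWithinAt_id r _).smul_const (v t z))))
    (fun r hr => by
      rw [one_smul, ← dist_eq_norm]
      refine (H (r, z) ⟨hsub hr, hz⟩ (t, z) ⟨ht, hz⟩ ?_).le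
      rw [dist_prod_same_right, Real.dist_eq]
      exact (abs_sub_left_of_mem_uIcc hr).trans_lt hst) left_mem_uIcc right_mem_uIcc
  rw [Real.norm_eq_abs] at key
  refine le_trans (le_of_eq ?_) key
  congr 1
  rw [sub_smul]
  abel

/-- The velocity of an isotopy of holomorphic maps is holomorphic. -/
theorem differentiableOn_velocity (h : IsHolIsotopy Ω Φ)
    {v : ℝ → EuclideanSpace ℂ (Fin n) → EuclideanSpace ℂ (Fin n)}
    (hvc : ContinuousOn (fun p : ℝ × EuclideanSpace ℂ (Fin n) => v p.1 p.2) (Icc (0 : ℝ) 1 ×ˢ Ω))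
    (hv : ∀ t ∈ Icc (0 : ℝ) 1, ∀ z ∈ Ω, HasDerivWithinAt (fun t => Φ t z) (v t z) (Icc 0 1) t)
    {t : ℝ} (ht : t ∈ Icc (0 : ℝ) 1) : DifferentiableOn ℂ (v t) Ω := by
  intro c hc
  obtain ⟨r, hr, hrΩ⟩ := Metric.nhds_basis_closedBall.mem_iff.1 (h.isOpen.mem_nhds hc)
  have hne : (𝓝[Icc (0 : ℝ) 1 \ {t}] t).NeBot := by
    have := (uniqueDiffOn_Icc (zero_lt_one (α := ℝ)) t ht).accPt
    rwa [accPt_principal_iff_nhdsWithin] at this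
  refine (differentiableAt_of_tendstoUniformlyOn_ball (l := 𝓝[Icc (0 : ℝ) 1 \ {t}] t) hr
    (q := fun s z => (((s - t)⁻¹ : ℝ) : ℂ) • (Φ s z - Φ t z)) ?_ ?_).differentiableWithinAt
  · filter_upwards [self_mem_nhdsWithin] with s hs
    exact (((h.differentiableOn s hs.1).sub (h.differentiableOn t ht)).const_smul
      (((s - t)⁻¹ : ℝ) : ℂ)).mono
      (ball_subset_closedBall.trans hrΩ)
  · rw [Metric.tendstoUniformlyOn_iff]
    intro ε hε
    obtain ⟨δ, hδ, H⟩ := exists_forall_norm_sub_sub_smul_le hvc hv (isCompact_closedBall c r) hrΩ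
      (half_pos hε)
    filter_upwards [self_mem_nhdsWithin, nhdsWithin_le_nhds (ball_mem_nhds t hδ)] with s hs hsδ z hz
    have h1 := H t ht s hs.1 (by rwa [mem_ball, Real.dist_eq] at hsδ) z (ball_subset_closedBall hz)
    have hst : s - t ≠ 0 := sub_ne_zero.2 hs.2
    have h2 : v t z - (((s - t)⁻¹ : ℝ) : ℂ) • (Φ s z - Φ t z)
        = -((s - t)⁻¹ • (Φ s z - Φ t z - (s - t) • v t z)) := by
      rw [Complex.coe_smul, smul_sub (s - t)⁻¹ _ ((s - t) • _), inv_smul_smul₀ hst]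
      abel
    rw [dist_eq_norm, h2, norm_neg, norm_smul, norm_inv, Real.norm_eq_abs,
      inv_mul_lt_iff₀ (abs_pos.2 hst)]
    nlinarith [abs_pos.2 hst]

/-- The space derivative of the isotopy is jointly continuous. -/
theorem continuousOn_fderiv (h : IsHolIsotopy Ω Φ) :
    ContinuousOn (fun p : ℝ × EuclideanSpace ℂ (Fin n) => fderiv ℂ (Φ p.1) p.2)
      (Icc (0 : ℝ) 1 ×ˢ Ω) := by
  rintro ⟨t, c⟩ ⟨ht, hc⟩
  obtain ⟨r, hr, hrΩ⟩ := Metric.nhds_basis_closedBall.mem_iff.1 (h.isOpen.mem_nhds hc)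
  have huc := ((isCompact_Icc (a := (0 : ℝ)) (b := 1)).prod
    (isCompact_closedBall c r)).uniformContinuousOn_of_continuous
    (h.contDiffOn.continuousOn.mono (prod_mono_right hrΩ))
  refine Metric.continuousWithinAt_iff.2 fun ε hε => ?_
  obtain ⟨δ, hδ, H⟩ := Metric.uniformContinuousOn_iff.1 huc (ε * r / 16) (by positivity)
  obtain ⟨δ', hδ', H'⟩ := Metric.continuousAt_iff.1 ((continuousOn_fderiv_of_differentiableOn
    h.isOpen (h.differentiableOn t ht)).continuousAt (h.isOpen.mem_nhds hc)) (ε / 2) (by positivity)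
  refine ⟨min δ (min δ' (r / 2)), by positivity, ?_⟩
  rintro ⟨s, z⟩ ⟨hs, hz⟩ hd
  simp only [Prod.dist_eq, max_lt_iff, lt_min_iff] at hd
  obtain ⟨⟨hsδ, -⟩, ⟨-, hzδ'⟩, -, hzr⟩ := hd
  have hsub : ball z (r / 2) ⊆ closedBall c r :=
    (ball_subset_ball' (by linarith)).trans ball_subset_closedBall
  have hda : DifferentiableAt ℂ (Φ s) z :=
    (h.differentiableOn s hs).differentiableAt (h.isOpen.mem_nhds hz)
  have hdb : DifferentiableAt ℂ (Φ t) z :=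
    (h.differentiableOn t ht).differentiableAt (h.isOpen.mem_nhds hz)
  have h1 : ‖fderiv ℂ (Φ s) z - fderiv ℂ (Φ t) z‖ ≤ 2 * (ε * r / 16) / (r / 2) := by
    rw [← fderiv_sub hda hdb]
    refine norm_fderiv_le_of_forall_mem_ball (by positivity)
      (((h.differentiableOn s hs).sub (h.differentiableOn t ht)).mono (hsub.trans hrΩ))
      fun w hw => ?_
    rw [Pi.sub_apply, ← dist_eq_norm]
    refine (H (s, w) ⟨hs, hsub hw⟩ (t, w) ⟨ht, hsub hw⟩ ?_).le
    rwa [dist_prod_same_right]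
  have h2 : 2 * (ε * r / 16) / (r / 2) = ε / 4 := by field_simp; norm_num
  calc dist (fderiv ℂ (Φ s) z) (fderiv ℂ (Φ t) c)
      ≤ dist (fderiv ℂ (Φ s) z) (fderiv ℂ (Φ t) z) + dist (fderiv ℂ (Φ t) z) (fderiv ℂ (Φ t) c) :=
        dist_triangle _ _ _
    _ < ε / 4 + ε / 2 := by
        rw [dist_eq_norm (fderiv ℂ (Φ s) z)]
        exact add_lt_add_of_le_of_lt (h2 ▸ h1) (H' hzδ')
    _ < ε := by linarith

/-- The space derivative of the isotopy is invertible. -/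
theorem exists_equiv_fderiv (h : IsHolIsotopy Ω Φ) {t : ℝ} (ht : t ∈ Icc (0 : ℝ) 1)
    {z : EuclideanSpace ℂ (Fin n)} (hz : z ∈ Ω) :
    ∃ A : EuclideanSpace ℂ (Fin n) ≃L[ℂ] EuclideanSpace ℂ (Fin n),
      (A : EuclideanSpace ℂ (Fin n) →L[ℂ] EuclideanSpace ℂ (Fin n)) = fderiv ℂ (Φ t) z := by
  have hinj := injective_fderiv_of_injOn rfl h.isOpen (h.differentiableOn t ht) (h.injOn t ht) hz
  refine ⟨(LinearEquiv.ofInjectiveEndo (fderiv ℂ (Φ t) z : _ →ₗ[ℂ] _)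
    hinj).toContinuousLinearEquiv, ?_⟩
  ext x : 1
  rfl

/-- The inverse of a time slice of the isotopy is holomorphic. -/
theorem differentiableOn_invFunOn (h : IsHolIsotopy Ω Φ) {t : ℝ} (ht : t ∈ Icc (0 : ℝ) 1) :
    DifferentiableOn ℂ (Function.invFunOn (Φ t) Ω) (Φ t '' Ω) := by
  rintro _ ⟨z, hz, rfl⟩
  obtain ⟨A, hA⟩ := h.exists_equiv_fderiv ht hz
  have hst : HasStrictFDerivAt (Φ t)
      (A : EuclideanSpace ℂ (Fin n) →L[ℂ] EuclideanSpace ℂ (Fin n)) z := by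
    rw [hA]
    exact (contDiffAt_one_of_differentiableOn h.isOpen (h.differentiableOn t ht)
      hz).hasStrictFDerivAt one_ne_zero
  have hli := hst.to_localInverse
  have hmem : ∀ᶠ w in 𝓝 (Φ t z), hst.localInverse (Φ t) A z w ∈ Ω :=
    hli.continuousAt.eventually (by
      rw [hst.localInverse_apply_image]; exact h.isOpen.mem_nhds hz)
  refine (hli.hasFDerivAt.congr_of_eventuallyEq ?_).differentiableAt.differentiableWithinAt
  filter_upwards [hmem, hst.eventually_right_inverse] with w hw hw'
  have hex : w ∈ Φ t '' Ω := ⟨_, hw, hw'⟩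
  exact h.injOn t ht (Function.invFunOn_mem hex) hw ((Function.invFunOn_eq hex).trans hw'.symm)

/-- Quantitative inverse function theorem, uniform over compact sets. -/
theorem exists_uniform_inverse (h : IsHolIsotopy Ω Φ) (hn : n ≠ 0) (hK : IsCompact K)
    (hKΩ : K ⊆ Ω) :
    ∃ L > 0, ∃ η > 0, ∀ t ∈ Icc (0 : ℝ) 1, ∀ z ∈ K, ∀ w, ‖w - Φ t z‖ ≤ η →
      ∃ z' ∈ Ω, Φ t z' = w ∧ ‖z' - z‖ ≤ L * ‖w - Φ t z‖ := by
  have : Nonempty (Fin n) := Fin.pos_iff_nonempty.1 (Nat.pos_of_ne_zero hn)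
  suffices H : ∃ L > 0, ∃ η > 0, ∀ p ∈ Icc (0 : ℝ) 1 ×ˢ K, ∀ w, ‖w - Φ p.1 p.2‖ ≤ η →
      ∃ z' ∈ Ω, Φ p.1 z' = w ∧ ‖z' - p.2‖ ≤ L * ‖w - Φ p.1 p.2‖ by
    obtain ⟨L, hL, η, hη, H⟩ := H
    exact ⟨L, hL, η, hη, fun t ht z hz => H (t, z) ⟨ht, hz⟩⟩
  refine (isCompact_Icc.prod hK).induction_on (p := fun S => ∃ L > 0, ∃ η > 0, ∀ p ∈ S,
    ∀ w, ‖w - Φ p.1 p.2‖ ≤ η → ∃ z' ∈ Ω, Φ p.1 z' = w ∧ ‖z' - p.2‖ ≤ L * ‖w - Φ p.1 p.2‖)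
    ⟨1, one_pos, 1, one_pos, by simp⟩ ?_ ?_ ?_
  · rintro S T hST ⟨L, hL, η, hη, H⟩
    exact ⟨L, hL, η, hη, fun p hp => H p (hST hp)⟩
  · rintro S T ⟨L, hL, η, hη, H⟩ ⟨L', hL', η', hη', H'⟩
    refine ⟨max L L', by positivity, min η η', by positivity, fun p hp w hw => ?_⟩
    rcases hp with hp | hp
    · obtain ⟨z', hz', he, hle⟩ := H p hp w (hw.trans (min_le_left _ _))
      exact ⟨z', hz', he, hle.trans (by gcongr; exact le_max_left _ _)⟩
    · obtain ⟨z', hz', he, hle⟩ := H' p hp w (hw.trans (min_le_right _ _))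
      exact ⟨z', hz', he, hle.trans (by gcongr; exact le_max_right _ _)⟩
  · rintro ⟨t, c⟩ ⟨ht, hc⟩
    obtain ⟨A, hA⟩ := h.exists_equiv_fderiv ht (hKΩ hc)
    have hN : 0 < ‖(A.symm : EuclideanSpace ℂ (Fin n) →L[ℂ] EuclideanSpace ℂ (Fin n))‖₊ :=
      A.subsingleton_or_nnnorm_symm_pos.resolve_left (not_subsingleton _)
    set N := ‖(A.symm : EuclideanSpace ℂ (Fin n) →L[ℂ] EuclideanSpace ℂ (Fin n))‖₊ with hNdef
    have hN' : (0 : ℝ) < N := hN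
    have hcN : (0 : ℝ) < (N : ℝ)⁻¹ / 2 := by positivity
    obtain ⟨δ, hδ, H⟩ := Metric.continuousWithinAt_iff.1 (h.continuousOn_fderiv (t, c) ⟨ht, hKΩ hc⟩)
      _ hcN
    obtain ⟨r, hr, hrΩ⟩ := Metric.isOpen_iff.1 h.isOpen c (hKΩ hc)
    set ρ := min δ r with hρdef
    have hρ : 0 < ρ := by positivity
    refine ⟨Icc (0 : ℝ) 1 ×ˢ K ∩ ball (t, c) (ρ / 2), inter_mem_nhdsWithin _
      (ball_mem_nhds _ (by positivity)), 2 * N, by positivity, (N : ℝ)⁻¹ / 2 * (ρ / 4),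
      by positivity, ?_⟩
    rintro ⟨s, z⟩ ⟨⟨hs, hz⟩, hsz⟩ w hw
    dsimp only at hw ⊢
    rw [mem_ball, Prod.dist_eq, max_lt_iff] at hsz
    obtain ⟨hst, hzc⟩ := hsz
    dsimp only at hst hzc
    have happ : ApproximatesLinearOn (Φ s)
        (A : EuclideanSpace ℂ (Fin n) →L[ℂ] EuclideanSpace ℂ (Fin n)) (ball c ρ) (N⁻¹ / 2) := by
      intro x hx y hy
      have := (convex_ball c ρ).norm_image_sub_le_of_norm_hasFDerivWithin_le' (𝕜 := ℂ)
        (f := Φ s) (f' := fderiv ℂ (Φ s)) (C := (N : ℝ)⁻¹ / 2)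
        (φ := (A : EuclideanSpace ℂ (Fin n) →L[ℂ] EuclideanSpace ℂ (Fin n)))
        (fun z hz => (((h.differentiableOn s hs).differentiableAt (h.isOpen.mem_nhds
          (hrΩ (ball_subset_ball (min_le_right _ _) hz)))).hasFDerivAt).hasFDerivWithinAt)
        (fun z hz => by
          rw [hA, ← dist_eq_norm]
          refine (H (x := (s, z)) ⟨hs, hrΩ (ball_subset_ball (min_le_right _ _) hz)⟩ ?_).le
          rw [Prod.dist_eq, max_lt_iff]
          have hz' : dist z c < ρ := hz
          exact ⟨by dsimp only; linarith [min_le_left δ r],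
            hz'.trans_le (min_le_left _ _)⟩) hy hx
      simpa using this
    set d := ‖w - Φ s z‖ with hd
    have hd0 : 0 ≤ d := norm_nonneg _
    have hball : closedBall z (2 * N * d) ⊆ ball c ρ := by
      refine closedBall_subset_ball' ?_
      have : 2 * N * d ≤ 2 * N * ((N : ℝ)⁻¹ / 2 * (ρ / 4)) := by gcongr
      have h2 : 2 * N * ((N : ℝ)⁻¹ / 2 * (ρ / 4)) = ρ / 4 := by field_simp
      linarith
    have hsurj := happ.surjOn_closedBall_of_nonlinearRightInverse A.toNonlinearRightInverse
      (by positivity) hball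
    have hNN : (A.toNonlinearRightInverse.nnnorm : ℝ) = N := rfl
    have hwmem : w ∈ closedBall (Φ s z)
        (((A.toNonlinearRightInverse.nnnorm : ℝ)⁻¹ - ((N⁻¹ / 2 : NNReal) : ℝ)) * (2 * N * d)) := by
      rw [mem_closedBall, dist_eq_norm, hNN]
      refine le_of_eq ?_
      push_cast
      rw [← hd]
      field_simp
      ring
    obtain ⟨z', hz', he⟩ := hsurj hwmem
    refine ⟨z', hrΩ (ball_subset_ball (min_le_right _ _) (hball hz')), he, ?_⟩
    rwa [mem_closedBall, dist_eq_norm] at hz'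

end IsHolIsotopy

end Isotopy

section Approximation

variable {n : ℕ} {Ω K : Set (EuclideanSpace ℂ (Fin n))}
  {Φ : ℝ → EuclideanSpace ℂ (Fin n) → EuclideanSpace ℂ (Fin n)}

/-- Vector-valued approximation by entire maps on Runge sets. -/
theorem IsRungeIn.exists_entire_map (hΩ : IsRungeIn Ω)
    {f : EuclideanSpace ℂ (Fin n) → EuclideanSpace ℂ (Fin n)} (hf : DifferentiableOn ℂ f Ω)
    (hKΩ : K ⊆ Ω) (hK : IsCompact K) {ε : ℝ} (hε : 0 < ε) :
    ∃ g : EuclideanSpace ℂ (Fin n) → EuclideanSpace ℂ (Fin n), Differentiable ℂ g ∧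
      ∀ z ∈ K, ‖g z - f z‖ ≤ ε := by
  have hex : ∀ i : Fin n, ∃ g : EuclideanSpace ℂ (Fin n) → ℂ, Differentiable ℂ g ∧
      ∀ z ∈ K, ‖g z - f z i‖ < ε / (n + 1) := fun i =>
    hΩ (fun z => f z i) ((EuclideanSpace.proj i : EuclideanSpace ℂ (Fin n) →L[ℂ] ℂ).differentiable
      |>.comp_differentiableOn hf) K hKΩ hK _ (by positivity)
  choose g hg hgK using hex
  refine ⟨fun z => ∑ i, g i z • EuclideanSpace.single i (1 : ℂ),
    Differentiable.fun_sum fun i _ => (hg i).smul_const _, fun z hz => ?_⟩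
  have hfz : f z = ∑ i, f z i • EuclideanSpace.single i (1 : ℂ) := by
    ext j
    simp [Pi.single_apply]
  calc ‖∑ i, g i z • EuclideanSpace.single i (1 : ℂ) - f z‖
      = ‖∑ i, (g i z - f z i) • EuclideanSpace.single i (1 : ℂ)‖ := by
        conv_lhs => rw [hfz]
        rw [← Finset.sum_sub_distrib]
        simp only [sub_smul]
    _ ≤ ∑ i : Fin n, ε / (n + 1) := by
        refine norm_sum_le_of_le _ fun i _ => ?_
        rw [norm_smul]
        simpa using (hgK i z hz).le
    _ = n * (ε / (n + 1)) := by simp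
    _ ≤ ε := by
        rw [mul_div_assoc', div_le_iff₀ (by positivity)]
        nlinarith

/-- Uniformly in the starting time, an isotopy with Runge images is followed to first order, over a
short time, by families of automorphisms. -/
theorem IsHolIsotopy.exists_uniform_local_approx (h : IsHolIsotopy Ω Φ) (hn : 2 ≤ n)
    (hRunge : ∀ t ∈ Icc (0 : ℝ) 1, IsRungeIn (Φ t '' Ω)) (hK : IsCompact K) (hKΩ : K ⊆ Ω)
    {δ : ℝ} (hδ : 0 < δ) :
    ∃ ρ > 0, ∀ t ∈ Icc (0 : ℝ) 1,
      ∃ A : ℝ → EuclideanSpace ℂ (Fin n) → EuclideanSpace ℂ (Fin n),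
        (Continuous fun p : ℝ × EuclideanSpace ℂ (Fin n) => A p.1 p.2) ∧ A 0 = id ∧
        (∀ s, IsHolomorphicAutomorphism (A s)) ∧
        ∀ s ∈ Icc 0 ρ, t + s ≤ 1 → ∀ z ∈ K, ‖A s (Φ t z) - Φ (t + s) z‖ ≤ δ * s := by
  obtain ⟨v, hvc, hv⟩ := h.exists_velocity
  obtain ⟨r, hr, hvr⟩ := IsHolIsotopy.exists_forall_norm_sub_sub_smul_le hvc hv hK hKΩ
    (show 0 < δ / 4 by positivity)
  have hcomp := (isCompact_Icc (a := (0 : ℝ)) (b := 1)).prod hK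
  have hΦc : ContinuousOn (fun p : ℝ × EuclideanSpace ℂ (Fin n) => Φ p.1 p.2)
      (Icc (0 : ℝ) 1 ×ˢ K) := h.contDiffOn.continuousOn.mono (prod_mono_right hKΩ)
  obtain ⟨R, hR⟩ := hcomp.exists_bound_of_continuousOn hΦc
  refine isCompact_Icc.induction_on (p := fun S : Set ℝ => ∃ ρ > 0, ∀ t ∈ S,
      ∃ A : ℝ → EuclideanSpace ℂ (Fin n) → EuclideanSpace ℂ (Fin n),
        (Continuous fun p : ℝ × EuclideanSpace ℂ (Fin n) => A p.1 p.2) ∧ A 0 = id ∧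
        (∀ s, IsHolomorphicAutomorphism (A s)) ∧
        ∀ s ∈ Icc 0 ρ, t + s ≤ 1 → ∀ z ∈ K, ‖A s (Φ t z) - Φ (t + s) z‖ ≤ δ * s)
    ⟨1, one_pos, by simp⟩ ?_ ?_ ?_
  · rintro S T hST ⟨ρ, hρ, H⟩
    exact ⟨ρ, hρ, fun t ht => H t (hST ht)⟩
  · rintro S T ⟨ρ, hρ, H⟩ ⟨ρ', hρ', H'⟩
    refine ⟨min ρ ρ', by positivity, fun t ht => ?_⟩
    rcases ht with ht | ht
    · obtain ⟨A, h1, h2, h3, h4⟩ := H t ht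
      exact ⟨A, h1, h2, h3, fun s hs => h4 s ⟨hs.1, hs.2.trans (min_le_left _ _)⟩⟩
    · obtain ⟨A, h1, h2, h3, h4⟩ := H' t ht
      exact ⟨A, h1, h2, h3, fun s hs => h4 s ⟨hs.1, hs.2.trans (min_le_right _ _)⟩⟩
  intro t₀ ht₀
  have hΦt₀ : ContinuousOn (Φ t₀) K := (h.differentiableOn t₀ ht₀).continuousOn.mono hKΩ
  have hV : DifferentiableOn ℂ (v t₀ ∘ Function.invFunOn (Φ t₀) Ω) (Φ t₀ '' Ω) :=
    (h.differentiableOn_velocity hvc hv ht₀).comp (h.differentiableOn_invFunOn ht₀)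
      fun w hw => Function.invFunOn_mem hw
  obtain ⟨g, hg, hgK⟩ := (hRunge t₀ ht₀).exists_entire_map hV (image_mono hKΩ)
    (hK.image_of_continuousOn hΦt₀) (show 0 < δ / 8 by positivity)
  obtain ⟨W, ⟨hWc, A, hAc, hA0, hAaut, hA⟩, hWg⟩ :=
    exists_isAutTangent_norm_sub_le hn hg R (show 0 < δ / 8 by positivity)
  have hWt₀ : ∀ z ∈ K, ‖W (Φ t₀ z) - v t₀ z‖ ≤ δ / 4 := by
    intro z hz
    have h1 := hgK _ (mem_image_of_mem _ hz)
    rw [Function.comp_apply, (h.injOn t₀ ht₀).leftInvOn_invFunOn (hKΩ hz)] at h1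
    have h2 := hWg (Φ t₀ z) (hR (t₀, z) ⟨ht₀, hz⟩)
    rw [norm_sub_rev] at h2
    linarith [norm_sub_le_norm_sub_add_norm_sub (W (Φ t₀ z)) (g (Φ t₀ z)) (v t₀ z)]
  have hcont : ContinuousOn (fun p : ℝ × EuclideanSpace ℂ (Fin n) => W (Φ p.1 p.2) - v p.1 p.2)
      (Icc (0 : ℝ) 1 ×ˢ K) :=
    (hWc.comp_continuousOn hΦc).sub (hvc.mono (prod_mono_right hKΩ))
  obtain ⟨η, hη, H⟩ := Metric.uniformContinuousOn_iff.1
    (hcomp.uniformContinuousOn_of_continuous hcont) (δ / 4) (by positivity)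
  obtain ⟨s₀, hs₀, hA⟩ := hA R (δ / 4) (by positivity)
  refine ⟨Icc 0 1 ∩ ball t₀ η, inter_mem_nhdsWithin _ (ball_mem_nhds _ hη), min s₀ (r / 2),
    by positivity, fun t ht => ⟨A, hAc, hA0, hAaut, fun s hs hts z hz => ?_⟩⟩
  have h1 := hA s ⟨hs.1, hs.2.trans (min_le_left _ _)⟩ (Φ t z) (hR (t, z) ⟨ht.1, hz⟩)
  have h2 := hvr t ht.1 (t + s) ⟨by linarith [ht.1.1, hs.1], hts⟩ (by
    rw [add_sub_cancel_left, abs_of_nonneg hs.1]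
    linarith [hs.2.trans (min_le_right _ _)]) z hz
  rw [add_sub_cancel_left, abs_of_nonneg hs.1] at h2
  have h3 : ‖W (Φ t z) - v t z‖ ≤ δ / 2 := by
    have h4 := H (t, z) ⟨ht.1, hz⟩ (t₀, z) ⟨ht₀, hz⟩ (by rw [dist_prod_same_right]; exact ht.2)
    rw [dist_eq_norm] at h4
    have h5 := norm_le_norm_add_norm_sub' (W (Φ t z) - v t z) (W (Φ t₀ z) - v t₀ z)
    linarith [hWt₀ z hz]
  calc ‖A s (Φ t z) - Φ (t + s) z‖
      = ‖(A s (Φ t z) - Φ t z - s • W (Φ t z)) - (Φ (t + s) z - Φ t z - s • v t z)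
          + s • (W (Φ t z) - v t z)‖ := by
        congr 1
        rw [smul_sub]
        abel
    _ ≤ (δ / 4 * s + δ / 4 * s) + s * (δ / 2) := by
        refine (norm_add_le _ _).trans (add_le_add ((norm_sub_le _ _).trans (add_le_add h1 h2)) ?_)
        rw [norm_smul, Real.norm_eq_abs, abs_of_nonneg hs.1]
        exact mul_le_mul_of_nonneg_left h3 hs.1
    _ = δ * s := by ring

end Approximation

/-- **The Andersén–Lempert theorem for ℂⁿ, n ≥ 2.**
Let `Ω ⊆ ℂⁿ` be open and `Φ : [0,1] × Ω → ℂⁿ` a `C¹`-smooth isotopy of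
injective holomorphic maps with Runge images, starting at the inclusion.  Then
on any compact `K ⊆ Ω` the isotopy can be approximated to any precision `ε` by
a continuous family of holomorphic automorphisms of `ℂⁿ` starting at the
identity. -/
theorem andersen_lempert_Cn
    (n : ℕ) (hn : 2 ≤ n)
    (Ω : Set (EuclideanSpace ℂ (Fin n))) (hΩ : IsOpen Ω)
    (Φ : ℝ → EuclideanSpace ℂ (Fin n) → EuclideanSpace ℂ (Fin n))
    (hΦsmooth : ContDiffOn ℝ 1
      (fun p : ℝ × EuclideanSpace ℂ (Fin n) => Φ p.1 p.2) (Set.Icc (0:ℝ) 1 ×ˢ Ω))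
    (hΦhol : ∀ t ∈ Set.Icc (0:ℝ) 1, DifferentiableOn ℂ (Φ t) Ω)
    (hΦinj : ∀ t ∈ Set.Icc (0:ℝ) 1, Set.InjOn (Φ t) Ω)
    (hΦ0 : ∀ z ∈ Ω, Φ 0 z = z)
    (hΦRunge : ∀ t ∈ Set.Icc (0:ℝ) 1, IsRungeIn (Φ t '' Ω))
    (ε : ℝ) (hε : 0 < ε)
    (K : Set (EuclideanSpace ℂ (Fin n))) (hKΩ : K ⊆ Ω) (hK : IsCompact K) :
    ∃ α : ℝ → EuclideanSpace ℂ (Fin n) → EuclideanSpace ℂ (Fin n),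
      ContinuousOn (fun p : ℝ × EuclideanSpace ℂ (Fin n) => α p.1 p.2)
        (Set.Icc (0:ℝ) 1 ×ˢ Set.univ) ∧
      (∀ t ∈ Set.Icc (0:ℝ) 1, IsHolomorphicAutomorphism (α t)) ∧
      (α 0 = id) ∧
      (∀ t ∈ Set.Icc (0:ℝ) 1, ∀ z ∈ K, ‖α t z - Φ t z‖ < ε) := by
  have h : IsHolIsotopy Ω Φ := ⟨hΩ, hΦsmooth, hΦhol, hΦinj⟩
  obtain ⟨κ, hκ, hκΩ⟩ := hK.exists_cthickening_subset_open hΩ hKΩ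
  have hK' : IsCompact (cthickening κ K) := hK.cthickening
  obtain ⟨L, hL, η, hη, hinv⟩ := h.exists_uniform_inverse (by omega) hK' hκΩ
  have huc := ((isCompact_Icc (a := (0 : ℝ)) (b := 1)).prod hK').uniformContinuousOn_of_continuous
    (hΦsmooth.continuousOn.mono (prod_mono_right hκΩ))
  obtain ⟨θ, hθ, hΦuc⟩ := Metric.uniformContinuousOn_iff.1 huc ε hε
  set δ : ℝ := min η (min κ (θ / 2) / L) with hδdef
  have hδ : 0 < δ := by positivity
  have hδη : δ ≤ η := min_le_left _ _
  have hLδ : L * δ ≤ min κ (θ / 2) := by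
    have : δ ≤ min κ (θ / 2) / L := min_le_right _ _
    rwa [le_div_iff₀ hL, mul_comm] at this
  have hmemK' : ∀ t ≤ (1 : ℝ), ∀ z ∈ K, ∀ z', ‖z' - z‖ ≤ L * δ * t → z' ∈ cthickening κ K := by
    intro t ht z hz z' hz'
    refine mem_cthickening_of_dist_le z' z κ K hz ?_
    rw [dist_eq_norm]
    have h1 : L * δ * t ≤ L * δ := mul_le_of_le_one_right (by positivity) ht
    linarith [min_le_left κ (θ / 2)]
  obtain ⟨ρ, hρ, hloc⟩ := h.exists_uniform_local_approx hn hΦRunge hK' hκΩ hδ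
  obtain ⟨N, hN⟩ := exists_nat_one_div_lt hρ
  set τ : ℝ := 1 / ((N : ℝ) + 1) with hτdef
  have hτ : 0 < τ := by positivity
  have hτ1 : (N + 1 : ℕ) * τ = 1 := by rw [hτdef]; push_cast; field_simp
  have hind : ∀ j : ℕ, j ≤ N + 1 →
      ∃ α : ℝ → EuclideanSpace ℂ (Fin n) → EuclideanSpace ℂ (Fin n),
        (Continuous fun p : ℝ × EuclideanSpace ℂ (Fin n) => α p.1 p.2) ∧
        (∀ t, IsHolomorphicAutomorphism (α t)) ∧ α 0 = id ∧
        ∀ t ∈ Icc (0 : ℝ) (j * τ), ∀ z ∈ K, ∃ z' ∈ Ω, Φ t z' = α t z ∧ ‖z' - z‖ ≤ L * δ * t := by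
    intro j
    induction j with
    | zero =>
      refine fun _ => ⟨fun _ => id, continuous_snd, fun _ => isHolomorphicAutomorphism_id, rfl,
        fun t ht z hz => ⟨z, hKΩ hz, ?_, ?_⟩⟩
      · have : t = 0 := by simpa using ht
        rw [this]
        exact hΦ0 z (hKΩ hz)
      · have : t = 0 := by simpa using ht
        simp [this]
    | succ j ih =>
      intro hj
      obtain ⟨α, hαc, hαaut, hα0, hα⟩ := ih (by omega)
      have hj0 : 0 ≤ j * τ := by positivity
      have hj1 : (j + 1 : ℕ) * τ ≤ 1 := by
        rw [← hτ1]
        gcongr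
      have hjsucc : ((j + 1 : ℕ) : ℝ) * τ = j * τ + τ := by push_cast; ring
      have hjle : j * τ ≤ 1 := by linarith
      obtain ⟨A, hAc, hA0, hAaut, hA⟩ := hloc (j * τ) ⟨hj0, hjle⟩
      refine ⟨fun t => A (max 0 (t - j * τ)) ∘ α (min t (j * τ)), ?_,
        fun t => (hAaut _).comp (hαaut _), ?_, fun t ht z hz => ?_⟩
      · have h1 : Continuous fun p : ℝ × EuclideanSpace ℂ (Fin n) => α (min p.1 (j * τ)) p.2 :=
          hαc.comp (f := fun p : ℝ × EuclideanSpace ℂ (Fin n) => (min p.1 (j * τ), p.2))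
            (by fun_prop)
        exact hAc.comp ((show Continuous fun p : ℝ × EuclideanSpace ℂ (Fin n) =>
          max 0 (p.1 - j * τ) by fun_prop).prodMk h1)
      · simp [hj0, hA0, hα0]
      rcases le_total t (j * τ) with htj | htj
      · have := hα t ⟨ht.1, htj⟩ z hz
        simpa [htj, hA0] using this
      have hs : 0 ≤ t - j * τ := by linarith
      obtain ⟨z', hz'Ω, hz'eq, hz'⟩ := hα (j * τ) ⟨hj0, le_rfl⟩ z hz
      have hz'K := hmemK' _ hjle z hz z' hz'
      have ht1 : t ≤ 1 := ht.2.trans hj1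
      have hsτ : t - j * τ ≤ τ := by linarith [ht.2]
      have hstep := hA (t - j * τ) ⟨hs, hsτ.trans hN.le⟩ (by linarith) z' hz'K
      rw [add_sub_cancel, hz'eq] at hstep
      have hle : δ * (t - j * τ) ≤ η :=
        (mul_le_of_le_one_right hδ.le (by linarith)).trans hδη
      obtain ⟨z'', hz''Ω, hz''eq, hz''⟩ := hinv t ⟨ht.1, ht1⟩ z' hz'K _ (hstep.trans hle)
      refine ⟨z'', hz''Ω, by simpa [htj, hs] using hz''eq, ?_⟩
      calc ‖z'' - z‖ ≤ ‖z'' - z'‖ + ‖z' - z‖ := norm_sub_le_norm_sub_add_norm_sub _ _ _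
        _ ≤ L * (δ * (t - j * τ)) + L * δ * (j * τ) :=
          add_le_add (hz''.trans (mul_le_mul_of_nonneg_left hstep hL.le)) hz'
        _ = L * δ * t := by ring
  obtain ⟨α, hαc, hαaut, hα0, hα⟩ := hind (N + 1) le_rfl
  refine ⟨α, hαc.continuousOn, fun t _ => hαaut t, hα0, fun t ht z hz => ?_⟩
  obtain ⟨z', -, hz'eq, hz'⟩ := hα t (by rwa [hτ1]) z hz
  rw [← hz'eq, ← dist_eq_norm]
  refine hΦuc (t, z') ⟨ht, hmemK' t ht.2 z hz z' hz'⟩ (t, z)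
    ⟨ht, self_subset_cthickening K hz⟩ ?_
  rw [dist_prod_same_left, dist_eq_norm]
  have h1 : L * δ * t ≤ L * δ := mul_le_of_le_one_right (by positivity) ht.2
  linarith [min_le_right κ (θ / 2)]
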